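/- arXiv:2411.04070 — 5 statements merged into one kernel-verified Lean document; each statement's English description precedes it below -/
import Mathlib

section
/- Let κ be a (P,ρ)-kernel on a locally finite weakly ranked poset (P,ρ), with right and left KLS functions f and g, Z-function Z = g^rev·f, Chow function ℋ, and augmented Chow functions F = ℋ·f^rev and G = g^rev·ℋ. Then for every s ≤ t in P: F_{st}(x) = Z_{st}(x) + Σ_{s<w≤t} (g^rev_{sw}(x) − x·g_{sw}(x))/(x−1)·F_{wt}(x), and G_{st}(x) = Z_{st}(x) + Σ_{s≤w<t} G_{sw}(x)·(f^rev_{wt}(x) − x·f_{wt}(x))/(x−1). -/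
/-!
At `x = 1` the equation `κ κ^rev = δ` becomes `κ(1)² = δ` in the incidence algebra over `ℤ`. Writing
`κ(1) = δ + n` gives `2 n = -n²`, and since `n` vanishes on the diagonal and `ℤ` has no `2`-torsion,
induction on intervals yields `n = 0`. Hence the division by `x - 1` in the reduced kernel is exact:
`(x - 1) κ̄ = κ - x δ`.

Multiplying by `g` gives `g^rev - x g = (x - 1) g κ̄`, and `κ̄ ℋ = -δ` cancels:
`(g^rev - x g) F = (x - 1) g κ̄ ℋ f^rev = -(x - 1) g f^rev = -(x - 1) g κ f = -(x - 1) Z`.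
The summand `w = s` of the convolution on the left is `(1 - x) F_{st}`; moving it to the other side
yields the formula for `F`. The formula for `G` comes from `G (f^rev - x f) = -(x - 1) Z`.
-/

open Finset Polynomial
open scoped Classical

noncomputable section

variable {α : Type*}

/-- Convolution product in the incidence algebra of a locally finite poset over `ℤ[x]`.
Only the values on intervals `s ≤ t` are relevant. -/
def conv [PartialOrder α] [LocallyFiniteOrder α] (a b : α → α → Polynomial ℤ) :
    α → α → Polynomial ℤ :=
  fun s t => ∑ w ∈ Finset.Icc s t, a s w * b w t

/-- The identity `δ` of the incidence algebra. -/
def dlt [PartialOrder α] : α → α → Polynomial ℤ :=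
  fun s t => if s = t then 1 else 0

/-- The involution `a ↦ a^rev`, given by `(a^rev)_{st}(x) = x^{ρ_{st}} a_{st}(1/x)`. -/
def rev (ρ : α → α → ℕ) (a : α → α → Polynomial ℤ) : α → α → Polynomial ℤ :=
  fun s t => (a s t).reflect (ρ s t)

/-- A weak rank function on a poset. -/
structure IsWeakRank [Preorder α] (ρ : α → α → ℕ) : Prop where
  pos : ∀ ⦃s t : α⦄, s < t → 0 < ρ s t
  add : ∀ ⦃s w t : α⦄, s ≤ w → w ≤ t → ρ s t = ρ s w + ρ w t

/-- `κ` is a `(P,ρ)`-kernel: it lies in `I_ρ(P)`, is `1` on the diagonal, and `κ⁻¹ = κ^rev`. -/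
structure IsKernel [PartialOrder α] [LocallyFiniteOrder α] (ρ : α → α → ℕ)
    (κ : α → α → Polynomial ℤ) : Prop where
  degLE : ∀ ⦃s t : α⦄, s ≤ t → (κ s t).natDegree ≤ ρ s t
  diag : ∀ s : α, κ s s = 1
  left : ∀ ⦃s t : α⦄, s ≤ t → conv (rev ρ κ) κ s t = dlt s t
  right : ∀ ⦃s t : α⦄, s ≤ t → conv κ (rev ρ κ) s t = dlt s t

/-- The reduced kernel `κ̄`: `κ̄_{st} = κ_{st}/(x-1)` for `s < t` and `κ̄_{ss} = -1`. -/
def red [PartialOrder α] (κ : α → α → Polynomial ℤ) : α → α → Polynomial ℤ :=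
  fun s t => if s = t then -1 else κ s t /ₘ (X - 1)

/-- `H` is the Chow function of `κ`, i.e. `H = -(κ̄)⁻¹`. -/
structure IsChow [PartialOrder α] [LocallyFiniteOrder α] (κ H : α → α → Polynomial ℤ) : Prop where
  left : ∀ ⦃s t : α⦄, s ≤ t → conv (red κ) H s t = -dlt s t
  right : ∀ ⦃s t : α⦄, s ≤ t → conv H (red κ) s t = -dlt s t

/-- `f` is the right KLS function of the kernel `κ`. -/
structure IsRightKLS [PartialOrder α] [LocallyFiniteOrder α] (ρ : α → α → ℕ)
    (κ f : α → α → Polynomial ℤ) : Prop where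
  diag : ∀ s : α, f s s = 1
  degLT : ∀ ⦃s t : α⦄, s < t → 2 * (f s t).natDegree < ρ s t
  rev_eq : ∀ ⦃s t : α⦄, s ≤ t → rev ρ f s t = conv κ f s t

/-- `g` is the left KLS function of the kernel `κ`. -/
structure IsLeftKLS [PartialOrder α] [LocallyFiniteOrder α] (ρ : α → α → ℕ)
    (κ g : α → α → Polynomial ℤ) : Prop where
  diag : ∀ s : α, g s s = 1
  degLT : ∀ ⦃s t : α⦄, s < t → 2 * (g s t).natDegree < ρ s t
  rev_eq : ∀ ⦃s t : α⦄, s ≤ t → rev ρ g s t = conv g κ s t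

/-- `p` is symmetric with center of symmetry `d/2`, i.e. `p(x) = x^d p(1/x)`. -/
def PolySymm (d : ℕ) (p : Polynomial ℤ) : Prop := p.natDegree ≤ d ∧ p.reflect d = p

/-- All coefficients of `p` are non-negative. -/
def PolyNonneg (p : Polynomial ℤ) : Prop := ∀ n, 0 ≤ p.coeff n

/-- The coefficient sequence of `p` is unimodal. -/
def PolyUnimodal (p : Polynomial ℤ) : Prop :=
  ∃ j, (∀ i < j, p.coeff i ≤ p.coeff (i + 1)) ∧ ∀ i, j ≤ i → p.coeff (i + 1) ≤ p.coeff i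

end

section ReducedKernel

variable {R A : Type*} [CommRing R] [Ring A] [Algebra R A] {x : R} {κ r H : A}

lemma mul_kernel_sub_smul (hr : (x - 1) • r = κ - x • 1) (g : A) :
    g * κ - x • g = (x - 1) • (g * r) := by
  rw [← mul_smul_comm, hr, mul_sub, mul_smul_comm, mul_one]

lemma kernel_mul_sub_smul (hr : (x - 1) • r = κ - x • 1) (f : A) :
    κ * f - x • f = (x - 1) • (r * f) := by
  rw [← smul_mul_assoc, hr, sub_mul, smul_mul_assoc, one_mul]

lemma mul_kernel_sub_smul_mul_chow_mul (hr : (x - 1) • r = κ - x • 1) (hrH : r * H = -1) (f g : A) :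
    (g * κ - x • g) * (H * (κ * f)) = -((x - 1) • (g * κ * f)) :=
  calc
    (g * κ - x • g) * (H * (κ * f)) = (x - 1) • (g * (r * H) * (κ * f)) := by
      rw [mul_kernel_sub_smul hr, smul_mul_assoc]
      simp only [mul_assoc]
    _ = -((x - 1) • (g * κ * f)) := by
      rw [hrH, mul_neg_one, neg_mul, smul_neg, mul_assoc]

lemma mul_chow_mul_kernel_mul_sub_smul (hr : (x - 1) • r = κ - x • 1) (hHr : H * r = -1) (f g : A) :
    (g * κ * H) * (κ * f - x • f) = -((x - 1) • (g * κ * f)) :=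
  calc
    (g * κ * H) * (κ * f - x • f) = (x - 1) • (g * κ * (H * r) * f) := by
      rw [kernel_mul_sub_smul hr, mul_smul_comm]
      simp only [mul_assoc]
    _ = -((x - 1) • (g * κ * f)) := by
      rw [hHr, mul_neg_one, neg_mul, smul_neg]

end ReducedKernel

lemma incidenceAlgebra_eq_one_of_mul_self_eq_one {R α : Type*} [Ring R] [IsAddTorsionFree R]
    [PartialOrder α] [LocallyFiniteOrder α] [DecidableEq α] {a : IncidenceAlgebra R α}
    (ha : a * a = 1) (hdiag : ∀ s, a s s = 1) : a = 1 := by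
  set n := a - 1 with hn
  have hn_diag (s : α) : n s s = 0 := by simp [hn, hdiag]
  have hn_sq : (2 : ℕ) • n = -(n * n) := by
    rw [hn, sub_mul, mul_sub, ha, one_mul, mul_one, two_nsmul]
    abel
  suffices h : ∀ s t, n s t = 0 by
    rw [← sub_eq_zero]
    ext s t _
    exact h s t
  intro s t
  induction hk : #(Icc s t) using Nat.strong_induction_on generalizing t with
  | _ k ih =>
    have hsum : (n * n) s t = 0 := by
      rw [IncidenceAlgebra.mul_apply]
      refine sum_eq_zero fun w hw => ?_
      obtain ⟨hsw, hwt⟩ := mem_Icc.mp hw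
      rcases hwt.eq_or_lt with rfl | hwt
      · rw [hn_diag, mul_zero]
      · have hcard : #(Icc s w) < k :=
          hk ▸ card_lt_card (Icc_ssubset_Icc_right (hsw.trans hwt.le) le_rfl hwt)
        rw [ih _ hcard w rfl, zero_mul]
    have htwo : (2 : ℕ) • n s t = 0 := by
      rw [← IncidenceAlgebra.constSMul_apply, hn_sq, IncidenceAlgebra.neg_apply, hsum, neg_zero]
    exact (nsmul_eq_zero_iff_right two_ne_zero).mp htwo

/-- The element of the incidence algebra given by the values of a two-variable function on the
intervals `s ≤ t`; its values at other pairs are discarded. -/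
noncomputable def toIncidenceAlgebra {R α : Type*} [Semiring R] [Preorder α] :
    (α → α → R) →ₗ[R] IncidenceAlgebra R α where
  toFun a := ⟨fun s t => if s ≤ t then a s t else 0, fun _ _ h => if_neg h⟩
  map_add' a b := by
    ext s t h
    simp [IncidenceAlgebra.add_apply, h]
  map_smul' c a := by
    ext s t h
    simp [IncidenceAlgebra.constSMul_apply, h]

section ToIncidenceAlgebra

variable {R α : Type*} [Semiring R]

lemma toIncidenceAlgebra_apply_of_le [Preorder α] (a : α → α → R) {s t : α} (h : s ≤ t) :
    toIncidenceAlgebra a s t = a s t :=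
  if_pos h

lemma toIncidenceAlgebra_congr [Preorder α] {a b : α → α → R} :
    toIncidenceAlgebra a = toIncidenceAlgebra b ↔ ∀ ⦃s t⦄, s ≤ t → a s t = b s t := by
  refine ⟨fun h s t hst => ?_, fun h => ?_⟩
  · rw [← toIncidenceAlgebra_apply_of_le a hst, h, toIncidenceAlgebra_apply_of_le b hst]
  · ext s t hst
    simp only [toIncidenceAlgebra_apply_of_le _ hst, h hst]

lemma toIncidenceAlgebra_mul_apply [Preorder α] [LocallyFiniteOrder α] (a b : α → α → R)
    (s t : α) :
    (toIncidenceAlgebra a * toIncidenceAlgebra b) s t = ∑ w ∈ Icc s t, a s w * b w t := by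
  rw [IncidenceAlgebra.mul_apply]
  refine sum_congr rfl fun w hw => ?_
  obtain ⟨hsw, hwt⟩ := mem_Icc.mp hw
  rw [toIncidenceAlgebra_apply_of_le a hsw, toIncidenceAlgebra_apply_of_le b hwt]

end ToIncidenceAlgebra

section Conv

variable {α : Type*} [PartialOrder α]

lemma toIncidenceAlgebra_dlt :
    toIncidenceAlgebra (dlt : α → α → ℤ[X]) = (1 : IncidenceAlgebra ℤ[X] α) :=
  IncidenceAlgebra.ext fun _ _ h => toIncidenceAlgebra_apply_of_le dlt h

variable [LocallyFiniteOrder α]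

lemma toIncidenceAlgebra_conv (a b : α → α → ℤ[X]) :
    toIncidenceAlgebra (conv a b) = toIncidenceAlgebra a * toIncidenceAlgebra b := by
  refine IncidenceAlgebra.ext fun s t h => ?_
  rw [toIncidenceAlgebra_apply_of_le _ h, toIncidenceAlgebra_mul_apply, conv]

lemma conv_self (a b : α → α → ℤ[X]) (s : α) : conv a b s s = a s s * b s s := by
  simp [conv]

lemma conv_eq_add_sum_Ioc (a b : α → α → ℤ[X]) {s t : α} (hst : s ≤ t) :
    conv a b s t = a s s * b s t + ∑ w ∈ Ioc s t, a s w * b w t :=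
  (add_sum_Ioc_eq_sum_Icc hst).symm

lemma conv_eq_add_sum_Ico (a b : α → α → ℤ[X]) {s t : α} (hst : s ≤ t) :
    conv a b s t = a s t * b t t + ∑ w ∈ Ico s t, a s w * b w t :=
  (add_sum_Ico_eq_sum_Icc hst).symm

end Conv

lemma eval_one_reflect {R : Type*} [CommSemiring R] {p : R[X]} {n : ℕ} (h : p.natDegree ≤ n) :
    (p.reflect n).eval 1 = p.eval 1 := by
  let _ : Invertible (1 : R) := invertibleOne
  simpa [eval₂_id] using eval₂_reflect_mul_pow (RingHom.id R) 1 n p h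

section Kernel

variable {α : Type*} [PartialOrder α]

lemma X_sub_one_mul_red {κ : α → α → ℤ[X]} (hκ_diag : ∀ s, κ s s = 1)
    (hκ_eval : ∀ ⦃s t⦄, s < t → (κ s t).eval 1 = 0) {s t : α} (hst : s ≤ t) :
    (X - 1) * red κ s t = κ s t - X * dlt s t := by
  rcases hst.eq_or_lt with rfl | hlt
  · simp [red, dlt, hκ_diag]
  · have hdiv : (X - 1) * (κ s t /ₘ (X - 1)) = κ s t := by
      simpa only [C_1] using mul_divByMonic_eq_iff_isRoot.mpr (hκ_eval hlt)
    simp [red, dlt, hlt.ne, hdiv]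

variable [LocallyFiniteOrder α]

lemma IsKernel.eval_one_eq_zero {ρ : α → α → ℕ} {κ : α → α → ℤ[X]} (hκ : IsKernel ρ κ)
    {s t : α} (hst : s < t) : (κ s t).eval 1 = 0 := by
  let κ₁ : IncidenceAlgebra ℤ α := toIncidenceAlgebra (R := ℤ) fun u v => (κ u v).eval 1
  have hκ₁_diag (u : α) : κ₁ u u = 1 := by
    rw [toIncidenceAlgebra_apply_of_le _ le_rfl, hκ.diag, eval_one]
  have hκ₁_sq : κ₁ * κ₁ = 1 := by
    ext u v huv
    calc
      (κ₁ * κ₁) u v = ∑ w ∈ Icc u v, (κ u w).eval 1 * (κ w v).eval 1 :=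
        toIncidenceAlgebra_mul_apply _ _ u v
      _ = ∑ w ∈ Icc u v, (κ u w).eval 1 * (rev ρ κ w v).eval 1 :=
        sum_congr rfl fun w hw => by rw [rev, eval_one_reflect (hκ.degLE (mem_Icc.mp hw).2)]
      _ = (conv κ (rev ρ κ) u v).eval 1 := by simp only [conv, eval_finsetSum, eval_mul]
      _ = (1 : IncidenceAlgebra ℤ α) u v := by
        rw [hκ.right huv, dlt, IncidenceAlgebra.one_apply]
        split_ifs <;> simp only [eval_one, eval_zero]
  calc
    (κ s t).eval 1 = κ₁ s t := by rw [toIncidenceAlgebra_apply_of_le _ hst.le]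
    _ = 0 := by
      rw [incidenceAlgebra_eq_one_of_mul_self_eq_one hκ₁_sq hκ₁_diag, IncidenceAlgebra.one_apply,
        if_neg hst.ne]

end Kernel

section Decomposition

variable {α : Type*} [PartialOrder α] [LocallyFiniteOrder α] {κ H f f' g g' : α → α → ℤ[X]}

lemma IsChow.toIncidenceAlgebra_red_mul (hH : IsChow κ H) :
    toIncidenceAlgebra (red κ) * toIncidenceAlgebra H = -1 := by
  rw [← toIncidenceAlgebra_conv, ← toIncidenceAlgebra_dlt, ← map_neg]
  exact toIncidenceAlgebra_congr.mpr hH.left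

lemma IsChow.toIncidenceAlgebra_mul_red (hH : IsChow κ H) :
    toIncidenceAlgebra H * toIncidenceAlgebra (red κ) = -1 := by
  rw [← toIncidenceAlgebra_conv, ← toIncidenceAlgebra_dlt, ← map_neg]
  exact toIncidenceAlgebra_congr.mpr hH.right

lemma X_sub_one_smul_toIncidenceAlgebra_red (hκ_diag : ∀ s, κ s s = 1)
    (hκ_eval : ∀ ⦃s t⦄, s < t → (κ s t).eval 1 = 0) :
    ((X : ℤ[X]) - 1) • toIncidenceAlgebra (red κ) =
      toIncidenceAlgebra κ - (X : ℤ[X]) • (1 : IncidenceAlgebra ℤ[X] α) := by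
  rw [← toIncidenceAlgebra_dlt, ← map_smul, ← map_smul, ← map_sub, toIncidenceAlgebra_congr]
  exact fun s t hst => X_sub_one_mul_red hκ_diag hκ_eval hst

lemma conv_sub_X_smul_conv_chow (hκ_diag : ∀ s, κ s s = 1)
    (hκ_eval : ∀ ⦃s t⦄, s < t → (κ s t).eval 1 = 0) (hH : IsChow κ H)
    (hf' : ∀ ⦃s t⦄, s ≤ t → f' s t = conv κ f s t)
    (hg' : ∀ ⦃s t⦄, s ≤ t → g' s t = conv g κ s t) {s t : α} (hst : s ≤ t) :
    conv (g' - (X : ℤ[X]) • g) (conv H f') s t = -((X - 1) * conv g' f s t) := by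
  have hred := X_sub_one_smul_toIncidenceAlgebra_red hκ_diag hκ_eval
  have hconv := mul_kernel_sub_smul_mul_chow_mul hred
    hH.toIncidenceAlgebra_red_mul (toIncidenceAlgebra f) (toIncidenceAlgebra g)
  simp only [← toIncidenceAlgebra_conv, ← toIncidenceAlgebra_congr.mpr hf',
    ← toIncidenceAlgebra_congr.mpr hg', ← map_smul, ← map_sub, ← map_neg] at hconv
  exact toIncidenceAlgebra_congr.mp hconv hst

lemma conv_conv_chow_sub_X_smul (hκ_diag : ∀ s, κ s s = 1)
    (hκ_eval : ∀ ⦃s t⦄, s < t → (κ s t).eval 1 = 0) (hH : IsChow κ H)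
    (hf' : ∀ ⦃s t⦄, s ≤ t → f' s t = conv κ f s t)
    (hg' : ∀ ⦃s t⦄, s ≤ t → g' s t = conv g κ s t) {s t : α} (hst : s ≤ t) :
    conv (conv g' H) (f' - (X : ℤ[X]) • f) s t = -((X - 1) * conv g' f s t) := by
  have hred := X_sub_one_smul_toIncidenceAlgebra_red hκ_diag hκ_eval
  have hconv := mul_chow_mul_kernel_mul_sub_smul hred
    hH.toIncidenceAlgebra_mul_red (toIncidenceAlgebra f) (toIncidenceAlgebra g)
  simp only [← toIncidenceAlgebra_conv, ← toIncidenceAlgebra_congr.mpr hf',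
    ← toIncidenceAlgebra_congr.mpr hg', ← map_smul, ← map_sub, ← map_neg] at hconv
  exact toIncidenceAlgebra_congr.mp hconv hst

/-- Here `f'` and `g'` play the roles of `f^rev` and `g^rev`. -/
theorem augmented_numerical_canonical_decomposition_general (hκ_diag : ∀ s, κ s s = 1)
    (hκ_eval : ∀ ⦃s t⦄, s < t → (κ s t).eval 1 = 0) (hH : IsChow κ H)
    (hf : ∀ s, f s s = 1) (hf' : ∀ ⦃s t⦄, s ≤ t → f' s t = conv κ f s t)
    (hg : ∀ s, g s s = 1) (hg' : ∀ ⦃s t⦄, s ≤ t → g' s t = conv g κ s t)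
    {s t : α} (hst : s ≤ t) :
    (X - 1) * conv H f' s t
        = (X - 1) * conv g' f s t + ∑ w ∈ Ioc s t, (g' s w - X * g s w) * conv H f' w t ∧
    (X - 1) * conv g' H s t
        = (X - 1) * conv g' f s t + ∑ w ∈ Ico s t, conv g' H s w * (f' w t - X * f w t) := by
  have hf'_diag : f' t t = 1 := by rw [hf' le_rfl, conv_self, hκ_diag, hf, one_mul]
  have hg'_diag : g' s s = 1 := by rw [hg' le_rfl, conv_self, hκ_diag, hg, one_mul]
  constructor
  · have hconv := conv_sub_X_smul_conv_chow hκ_diag hκ_eval hH hf' hg' hst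
    simp only [conv_eq_add_sum_Ioc _ (conv H f') hst, Pi.sub_apply, Pi.smul_apply, smul_eq_mul,
      hg'_diag, hg] at hconv
    linear_combination -hconv
  · have hconv := conv_conv_chow_sub_X_smul hκ_diag hκ_eval hH hf' hg' hst
    simp only [conv_eq_add_sum_Ico (conv g' H) _ hst, Pi.sub_apply, Pi.smul_apply, smul_eq_mul,
      hf'_diag, hf] at hconv
    linear_combination -hconv

end Decomposition

/-- Theorem 3.16 (augmented numerical canonical decomposition): with `Z = g^rev·f`,
`F = ℋ·f^rev` and `G = g^rev·ℋ`, for every `s ≤ t`: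
`F_{st} = Z_{st} + Σ_{s<w≤t} (g^rev_{sw} - x g_{sw})/(x-1) · F_{wt}` and
`G_{st} = Z_{st} + Σ_{s≤w<t} G_{sw} · (f^rev_{wt} - x f_{wt})/(x-1)`.
(The identities are stated after clearing the denominator `x - 1`.) -/
theorem augmented_numerical_canonical_decomposition [PartialOrder α] [LocallyFiniteOrder α]
    (ρ : α → α → ℕ) (hρ : IsWeakRank ρ)
    (κ : α → α → Polynomial ℤ) (hκ : IsKernel ρ κ)
    (H : α → α → Polynomial ℤ) (hH : IsChow κ H)
    (f : α → α → Polynomial ℤ) (hf : IsRightKLS ρ κ f)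
    (g : α → α → Polynomial ℤ) (hg : IsLeftKLS ρ κ g)
    (s t : α) (hst : s ≤ t) :
    (X - 1) * conv H (rev ρ f) s t
        = (X - 1) * conv (rev ρ g) f s t
          + ∑ w ∈ Finset.Ioc s t, (rev ρ g s w - X * g s w) * conv H (rev ρ f) w t ∧
    (X - 1) * conv (rev ρ g) H s t
        = (X - 1) * conv (rev ρ g) f s t
          + ∑ w ∈ Finset.Ico s t, conv (rev ρ g) H s w * (rev ρ f w t - X * f w t) :=
  augmented_numerical_canonical_decomposition_general hκ.diag
    (fun _ _ => hκ.eval_one_eq_zero) hH hf.diag hf.rev_eq hg.diag hg.rev_eq hst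
end

section
/- Let κ be a (P,ρ)-kernel on a locally finite weakly ranked poset (P,ρ), with right and left KLS functions f and g, Z-function Z = g^rev·f, and augmented Chow functions F = ℋ·f^rev and G = g^rev·ℋ (where ℋ is the Chow function). Then: (i) if f is non-negative then F is non-negative, and if g is non-negative then G is non-negative; (ii) if Z is non-negative and unimodal and g is non-negative, then F is unimodal, and if Z is non-negative and unimodal and f is non-negative, then G is unimodal. -/
/-!
At `x = 1` the identity `κ^rev·κ = δ` forces `κ(1) = δ`, so `κ = (1 - x)·(-κ̄) + x·δ`, and
`g^rev = g·κ` gives `(1 - x)·g·(-κ̄) = g^rev - x·g`. Hence `g·(-κ̄) = δ - c`, where `c` vanishes on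
the diagonal and, because `g` has small degree, is a non-negative combination of symmetric
unimodal blocks `x^i + ⋯ + x^(d-i)`. Since `ℋ` is the inverse of `-κ̄`,
`(δ - c)·ℋ = g` and `(δ - c)·F = g·f^rev = g^rev·f = Z`, so `ℋ = Σ c^k·g` and `F = Σ c^k·Z`.
The blocks multiply by the Clebsch–Gordan rule, so the cone of symmetric unimodal polynomials is
closed under products, and both sums stay in the relevant cone. The mirror image, with
`(-κ̄)·f = δ - c`, gives `ℋ = Σ f·c^k` and `G = Σ Z·c^k`.
-/

open Finset Polynomial
open scoped Classical

/-! ### Symmetric unimodal polynomials -/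

section Polynomials

variable {R : Type*} [CommRing R] {d e i j : ℕ} {p q : R[X]}

lemma reflect_sum {ι : Type*} (N : ℕ) (s : Finset ι) (P : ι → R[X]) :
    (∑ w ∈ s, P w).reflect N = ∑ w ∈ s, (P w).reflect N :=
  map_sum (⟨⟨reflect N, reflect_zero⟩, fun p q => reflect_add p q N⟩ : R[X] →+ R[X]) P s

lemma eval_one_reflect_s11 (h : p.natDegree ≤ d) : (p.reflect d).eval 1 = p.eval 1 := by
  let : Invertible (1 : R) := invertibleOne
  simpa only [eval₂_id, invOf_one, one_pow, mul_one] using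
    eval₂_reflect_mul_pow (RingHom.id R) 1 d p h

variable (R d i) in
/-- The block `x^i + x^(i+1) + ⋯ + x^(d-i)`, the simplest symmetric unimodal polynomial with center
`d/2`; it is `0` when `d < 2 * i`. -/
noncomputable def block : R[X] := ∑ k ∈ Ico i (d + 1 - i), X ^ k

lemma coeff_block (k : ℕ) : (block R d i).coeff k = if i ≤ k ∧ k + i ≤ d then 1 else 0 := by
  simp only [block, finsetSum_coeff, coeff_X_pow, Finset.sum_ite_eq, Finset.mem_Ico]
  congr 2
  apply propext
  omega

lemma sub_one_mul_block (h : 2 * i ≤ d + 1) :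
    (X - 1) * block R d i = X ^ (d + 1 - i) - X ^ i := by
  rw [mul_comm]
  exact geom_sum_Ico_mul X (by omega)

lemma X_sub_one_mul_cancel (h : (X - 1) * p = (X - 1) * q) : p = q := by
  rw [← C_1] at h
  exact (monic_X_sub_C (1 : R)).isRegular.left h

/-- The Clebsch–Gordan rule for characters of `SL₂`. -/
lemma block_mul_block (h : d + 2 * j ≤ e + 2 * i) :
    block R d i * block R e j = ∑ k ∈ Ico i (d + 1 - i), block R (d + e) (j + k) := by
  rcases lt_or_ge d (2 * i) with hi | hi
  · simp only [block, Ico_eq_empty_of_le (show d + 1 - i ≤ i by omega), sum_empty, zero_mul]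
  have top_exponents : ∑ k ∈ Ico i (d + 1 - i), (X : R[X]) ^ (d + e + 1 - (j + k)) =
      ∑ k ∈ Ico i (d + 1 - i), X ^ (k + (e + 1 - j)) := by
    have := sum_Ico_reflect (fun k => (X : R[X]) ^ (k + (e + 1 - j))) i
      (show d + 1 - i ≤ d + 1 by omega)
    rw [show d + 1 - (d + 1 - i) = i by omega] at this
    rw [← this]
    refine sum_congr rfl fun k hk => ?_
    rw [Finset.mem_Ico] at hk
    congr 1
    omega
  apply X_sub_one_mul_cancel
  calc (X - 1) * (block R d i * block R e j)
      = block R d i * (X ^ (e + 1 - j) - X ^ j) := by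
        rw [← sub_one_mul_block (by omega)]; ring
    _ = ∑ k ∈ Ico i (d + 1 - i), (X ^ (d + e + 1 - (j + k)) - X ^ (j + k)) := by
        rw [sum_sub_distrib, top_exponents, block, mul_sub, sum_mul, sum_mul]
        simp only [pow_add, mul_comm]
    _ = (X - 1) * ∑ k ∈ Ico i (d + 1 - i), block R (d + e) (j + k) := by
        rw [mul_sum]
        refine sum_congr rfl fun k hk => (sub_one_mul_block ?_).symm
        rw [Finset.mem_Ico] at hk
        omega

lemma eq_sum_block (hd : p.natDegree ≤ d) (hp : p.reflect d = p) :
    p = C (p.coeff 0) * block R d 0 +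
      ∑ i ∈ range (d / 2), C (p.coeff (i + 1) - p.coeff i) * block R d (i + 1) := by
  ext k
  simp only [coeff_add, finsetSum_coeff, coeff_C_mul, coeff_block, mul_ite, mul_one, mul_zero]
  rcases lt_or_ge d k with hk | hk
  · rw [coeff_eq_zero_of_natDegree_lt (hd.trans_lt hk), if_neg (by omega),
      sum_eq_zero fun i _ => if_neg (by omega), add_zero]
  have coeff_min : p.coeff k = p.coeff (min k (d - k)) := by
    rcases min_choice k (d - k) with h | h <;> rw [h]
    conv_lhs => rw [← hp, coeff_reflect, revAt_le hk]
  have telescope : ∑ i ∈ range (d / 2),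
      (if i + 1 ≤ k ∧ k + (i + 1) ≤ d then p.coeff (i + 1) - p.coeff i else 0) =
      p.coeff (min k (d - k)) - p.coeff 0 := by
    rw [← sum_filter, ← sum_range_sub]
    congr 1
    ext i
    simp only [Finset.mem_filter, Finset.mem_range]
    omega
  rw [telescope, coeff_min, if_pos (by omega)]
  ring

section Ordered

variable [PartialOrder R]

variable (R) in
/-- The cone of symmetric unimodal polynomials with non-negative coefficients and center `d/2`,
encoded as the cone spanned by the blocks of center `d/2`; see
`mem_symmUnimodal_of_reflect_eq` and `polyUnimodal_of_mem_symmUnimodal`. -/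
noncomputable def symmUnimodal (d : ℕ) : AddSubmonoid R[X] :=
  AddSubmonoid.closure {p | ∃ (c : R) (i : ℕ), 0 ≤ c ∧ p = C c * block R d i}

lemma C_mul_block_mem_symmUnimodal {c : R} (hc : 0 ≤ c) : C c * block R d i ∈ symmUnimodal R d :=
  AddSubmonoid.subset_closure ⟨c, i, hc, rfl⟩

lemma C_mul_block_mul_block_mem_symmUnimodal {c : R} (hc : 0 ≤ c) :
    C c * (block R d i * block R e j) ∈ symmUnimodal R (d + e) := by
  wlog h : d + 2 * j ≤ e + 2 * i generalizing d e i j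
  · rw [mul_comm (block R d i), add_comm d]
    exact this (by omega)
  rw [block_mul_block h, mul_sum]
  exact sum_mem fun _ _ => C_mul_block_mem_symmUnimodal hc

variable [IsOrderedRing R]

variable (R) in
/-- The polynomials with non-negative coefficients. -/
def nonnegCoeffs : Subsemiring R[X] where
  carrier := {p | ∀ n, 0 ≤ p.coeff n}
  zero_mem' _ := by simp
  one_mem' n := by rw [coeff_one]; split_ifs <;> simp
  add_mem' ha hb n := by rw [coeff_add]; exact add_nonneg (ha n) (hb n)
  mul_mem' ha hb n := by
    rw [coeff_mul]; exact sum_nonneg fun _ _ => mul_nonneg (ha _) (hb _)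

lemma reflect_mem_nonnegCoeffs (hp : p ∈ nonnegCoeffs R) (N : ℕ) :
    p.reflect N ∈ nonnegCoeffs R := fun n => by
  rw [coeff_reflect]; exact hp _

open scoped Pointwise in
instance : SetLike.GradedMul (symmUnimodal R) where
  mul_mem d e p q hp hq := by
    have hpq := AddSubmonoid.mul_mem_mul hp hq
    rw [symmUnimodal, symmUnimodal, AddSubmonoid.closure_mul_closure] at hpq
    refine AddSubmonoid.closure_le.2 ?_ hpq
    rintro _ ⟨_, ⟨a, i, ha, rfl⟩, _, ⟨b, j, hb, rfl⟩, rfl⟩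
    dsimp only
    rw [mul_mul_mul_comm, ← C_mul]
    exact C_mul_block_mul_block_mem_symmUnimodal (mul_nonneg ha hb)

instance : SetLike.GradedMul fun _ : ℕ => (nonnegCoeffs R).toAddSubmonoid where
  mul_mem _ _ _ _ := (nonnegCoeffs R).mul_mem

lemma symmUnimodal_le_nonnegCoeffs : symmUnimodal R d ≤ (nonnegCoeffs R).toAddSubmonoid := by
  refine AddSubmonoid.closure_le.2 ?_
  rintro _ ⟨c, i, hc, rfl⟩ k
  rw [coeff_C_mul, coeff_block]
  split_ifs <;> simp [hc]

lemma mem_symmUnimodal_of_reflect_eq (hd : p.natDegree ≤ d) (hp : p.reflect d = p)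
    (h0 : 0 ≤ p.coeff 0) (hmono : ∀ i, 2 * i + 2 ≤ d → p.coeff i ≤ p.coeff (i + 1)) :
    p ∈ symmUnimodal R d := by
  rw [eq_sum_block hd hp]
  refine add_mem (C_mul_block_mem_symmUnimodal h0) (sum_mem fun i hi => ?_)
  rw [Finset.mem_range] at hi
  exact C_mul_block_mem_symmUnimodal (sub_nonneg.2 (hmono i (by omega)))

/-- The monomial `x^i` of `p` contributes the block `x^(i+1) + ⋯ + x^(d-i-1)` to `q`. -/
lemma exists_mem_symmUnimodal_sub_one_mul_eq (hd : 2 * p.natDegree < d)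
    (hp : p ∈ nonnegCoeffs R) : ∃ q ∈ symmUnimodal R d, (X - 1) * q = p.reflect d - X * p := by
  refine ⟨∑ i ∈ range (p.natDegree + 1), C (p.coeff i) * block R d (i + 1),
    sum_mem fun i _ => C_mul_block_mem_symmUnimodal (hp i), ?_⟩
  conv_rhs => rw [p.as_sum_range_C_mul_X_pow]
  rw [reflect_sum, mul_sum, mul_sum, ← sum_sub_distrib]
  refine sum_congr rfl fun i hi => ?_
  rw [Finset.mem_range] at hi
  rw [mul_left_comm, sub_one_mul_block (by omega), reflect_C_mul_X_pow, revAt_le (by omega),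
    Nat.add_sub_add_right]
  ring

end Ordered

lemma polyUnimodal_of_mem_symmUnimodal {p : ℤ[X]} (hp : p ∈ symmUnimodal ℤ d) :
    PolyUnimodal p := by
  refine ⟨d / 2, ?_⟩
  induction hp using AddSubmonoid.closure_induction with
  | zero => simp only [coeff_zero, le_refl, implies_true, and_self]
  | add p q _ _ hp hq =>
    simp only [coeff_add]
    exact ⟨fun i hi => add_le_add (hp.1 i hi) (hq.1 i hi),
      fun i hi => add_le_add (hp.2 i hi) (hq.2 i hi)⟩
  | mem p hp =>
    obtain ⟨c, i, hc, rfl⟩ := hp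
    simp only [coeff_C_mul, coeff_block]
    constructor <;> intro k hk <;> refine mul_le_mul_of_nonneg_left ?_ hc <;> split_ifs <;> omega

lemma PolySymm.mem_symmUnimodal {p : ℤ[X]} (hs : PolySymm d p) (hn : PolyNonneg p)
    (hu : PolyUnimodal p) : p ∈ symmUnimodal ℤ d := by
  obtain ⟨j, hmono, hanti⟩ := hu
  refine mem_symmUnimodal_of_reflect_eq hs.1 hs.2 (hn 0) fun i hi => ?_
  rcases lt_or_ge i j with hij | hji
  · exact hmono i hij
  -- Past the mode the coefficients decrease, and `p_i = p_(d-i)` comes after `p_(i+1)`.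
  · calc p.coeff i = p.coeff (d - i) := by
          conv_lhs => rw [← hs.2, coeff_reflect, revAt_le (by omega)]
      _ ≤ p.coeff (i + 1) :=
          Nat.rel_of_forall_rel_succ_of_le_of_le (· ≥ ·) hanti (by omega) (by omega)

end Polynomials

/-! ### Incidence algebras of weakly ranked posets -/

section Entrywise

variable {α A σ : Type*} [LE α] [SetLike σ A] {ρ : α → α → ℕ} {S : ℕ → σ}

variable (ρ S) in
/-- The elements `a` of the incidence algebra with `a_{st} ∈ S (ρ_{st})` for all `s ≤ t`. -/
def entrywise [AddCommMonoid A] [AddSubmonoidClass σ A] : AddSubmonoid (IncidenceAlgebra A α) where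
  carrier := {a | ∀ s t, s ≤ t → a s t ∈ S (ρ s t)}
  zero_mem' _ _ _ := zero_mem _
  add_mem' ha hb s t h := add_mem (ha s t h) (hb s t h)

/-- Expand `a = Σ_k T^k (a - T a)`; on each interval the series is finite. -/
lemma mem_entrywise_of_sub_apply_mem [AddCommGroup A] [AddSubmonoidClass σ A]
    {T : IncidenceAlgebra A α →+ IncidenceAlgebra A α} {a : IncidenceAlgebra A α}
    (hT : ∀ s t, ∃ n, T^[n] a s t = 0) (hS : ∀ b ∈ entrywise ρ S, T b ∈ entrywise ρ S)
    (h : a - T a ∈ entrywise ρ S) : a ∈ entrywise ρ S := by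
  intro s t hst
  obtain ⟨n, hn⟩ := hT s t
  have terms_mem (k : ℕ) : T^[k] (a - T a) ∈ entrywise ρ S := by
    induction k with
    | zero => exact h
    | succ k ih => rw [Function.iterate_succ_apply']; exact hS _ ih
  have expansion : a = ∑ k ∈ range n, T^[k] (a - T a) + T^[n] a := by
    simp only [iterate_map_sub, ← Function.iterate_succ_apply, sum_range_sub',
      Function.iterate_zero_apply, sub_add_cancel]
  rw [expansion, IncidenceAlgebra.add_apply, hn, add_zero]
  exact (sum_mem fun k _ => terms_mem k : _ ∈ entrywise ρ S) s t hst

end Entrywise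

section WeakRank

variable {α A σ : Type*} [PartialOrder α] [LocallyFiniteOrder α] {ρ : α → α → ℕ}

section Semiring

variable [Semiring A] [SetLike σ A] [AddSubmonoidClass σ A] {S : ℕ → σ}
  {a b c : IncidenceAlgebra A α}

lemma mul_mem_entrywise [SetLike.GradedMul S] (hρ : IsWeakRank ρ)
    (ha : a ∈ entrywise ρ S) (hb : b ∈ entrywise ρ S) : a * b ∈ entrywise ρ S := by
  refine fun s t _ => sum_mem fun w hw => ?_
  obtain ⟨hsw, hwt⟩ := Finset.mem_Icc.1 hw
  rw [hρ.add hsw hwt]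
  exact SetLike.mul_mem_graded (ha s w hsw) (hb w t hwt)

lemma pow_apply_eq_zero (hρ : IsWeakRank ρ) (hc : ∀ s, c s s = 0) {n : ℕ} {s t : α}
    (h : ρ s t < n) : (c ^ n) s t = 0 := by
  induction n generalizing t with
  | zero => omega
  | succ n ih =>
    rw [pow_succ, IncidenceAlgebra.mul_apply]
    refine sum_eq_zero fun w hw => ?_
    obtain ⟨hsw, hwt⟩ := Finset.mem_Icc.1 hw
    rcases hwt.eq_or_lt with rfl | hwt
    · rw [hc, mul_zero]
    · have := hρ.add hsw hwt.le
      have := hρ.pos hwt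
      rw [ih (by omega), zero_mul]

end Semiring

section Ring

variable [Ring A] [SetLike σ A] [AddSubmonoidClass σ A] {S : ℕ → σ} {a c : IncidenceAlgebra A α}

lemma mem_entrywise_of_mul_one_sub_mem (hρ : IsWeakRank ρ) (hc : ∀ s, c s s = 0)
    (hmul : ∀ b ∈ entrywise ρ S, b * c ∈ entrywise ρ S) (h : a * (1 - c) ∈ entrywise ρ S) :
    a ∈ entrywise ρ S := by
  refine mem_entrywise_of_sub_apply_mem (T := AddMonoidHom.mulRight c)
    (fun s t => ⟨ρ s t + 1, ?_⟩) hmul (by rwa [mul_sub, mul_one] at h)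
  have iterate_eq : (AddMonoidHom.mulRight c)^[ρ s t + 1] a = a * c ^ (ρ s t + 1) :=
    mul_right_iterate_apply ..
  rw [iterate_eq, IncidenceAlgebra.mul_apply]
  refine sum_eq_zero fun w hw => ?_
  have := hρ.add (Finset.mem_Icc.1 hw).1 (Finset.mem_Icc.1 hw).2
  rw [pow_apply_eq_zero hρ hc (by omega), mul_zero]

lemma mem_entrywise_of_one_sub_mul_mem (hρ : IsWeakRank ρ) (hc : ∀ s, c s s = 0)
    (hmul : ∀ b ∈ entrywise ρ S, c * b ∈ entrywise ρ S) (h : (1 - c) * a ∈ entrywise ρ S) :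
    a ∈ entrywise ρ S := by
  refine mem_entrywise_of_sub_apply_mem (T := AddMonoidHom.mulLeft c)
    (fun s t => ⟨ρ s t + 1, ?_⟩) hmul (by rwa [sub_mul, one_mul] at h)
  have iterate_eq : (AddMonoidHom.mulLeft c)^[ρ s t + 1] a = c ^ (ρ s t + 1) * a :=
    mul_left_iterate_apply ..
  rw [iterate_eq, IncidenceAlgebra.mul_apply]
  refine sum_eq_zero fun w hw => ?_
  have := hρ.add (Finset.mem_Icc.1 hw).1 (Finset.mem_Icc.1 hw).2
  rw [pow_apply_eq_zero hρ hc (by omega), zero_mul]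

end Ring

end WeakRank

/-! ### Kazhdan–Lusztig–Stanley and Chow functions -/

section KLS

variable {α : Type*} [PartialOrder α] {ρ : α → α → ℕ}
  {a b κ f g H : α → α → ℤ[X]}

/-- The element of Mathlib's incidence algebra with the values of `a` on the intervals `s ≤ t`.
It carries `conv` and `dlt`, which act on arbitrary functions `α → α → ℤ[X]`, to the ring
operations. -/
noncomputable def toIncidence (a : α → α → ℤ[X]) : IncidenceAlgebra ℤ[X] α where
  toFun s t := if s ≤ t then a s t else 0
  eq_zero_of_not_le' _ _ h := if_neg h

lemma toIncidence_apply {s t : α} (h : s ≤ t) : toIncidence a s t = a s t :=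
  if_pos h

lemma toIncidence_mem_entrywise {σ : Type*} [SetLike σ ℤ[X]] [AddSubmonoidClass σ ℤ[X]]
    {S : ℕ → σ} :
    toIncidence a ∈ entrywise ρ S ↔ ∀ s t, s ≤ t → a s t ∈ S (ρ s t) :=
  forall₃_congr fun s t h => by rw [toIncidence_apply h]

lemma natDegree_rev_le (ha : ∀ ⦃s t⦄, s ≤ t → (a s t).natDegree ≤ ρ s t) ⦃s t : α⦄ (h : s ≤ t) :
    (rev ρ a s t).natDegree ≤ ρ s t :=
  natDegree_reflect_le.trans (max_le le_rfl (ha h))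

lemma natDegree_le_of_two_mul_natDegree_lt (hdiag : ∀ s, a s s = 1)
    (hdeg : ∀ ⦃s t⦄, s < t → 2 * (a s t).natDegree < ρ s t) ⦃s t : α⦄ (h : s ≤ t) :
    (a s t).natDegree ≤ ρ s t := by
  rcases h.eq_or_lt with rfl | h
  · simp only [hdiag, natDegree_one, zero_le]
  · have := hdeg h
    omega

variable [LocallyFiniteOrder α]

lemma toIncidence_conv (a b : α → α → ℤ[X]) :
    toIncidence (conv a b) = toIncidence a * toIncidence b := by
  ext1 s t h
  rw [toIncidence_apply h, IncidenceAlgebra.mul_apply]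
  refine sum_congr rfl fun w hw => ?_
  obtain ⟨hsw, hwt⟩ := Finset.mem_Icc.1 hw
  rw [toIncidence_apply hsw, toIncidence_apply hwt]

lemma rev_conv (hρ : IsWeakRank ρ) (ha : ∀ ⦃s t⦄, s ≤ t → (a s t).natDegree ≤ ρ s t)
    (hb : ∀ ⦃s t⦄, s ≤ t → (b s t).natDegree ≤ ρ s t) (s t : α) :
    rev ρ (conv a b) s t = conv (rev ρ a) (rev ρ b) s t := by
  rw [rev, conv, reflect_sum]
  refine sum_congr rfl fun w hw => ?_
  obtain ⟨hsw, hwt⟩ := Finset.mem_Icc.1 hw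
  rw [hρ.add hsw hwt, reflect_mul _ _ (ha hsw) (hb hwt), rev, rev]

lemma natDegree_conv_le (hρ : IsWeakRank ρ) (ha : ∀ ⦃s t⦄, s ≤ t → (a s t).natDegree ≤ ρ s t)
    (hb : ∀ ⦃s t⦄, s ≤ t → (b s t).natDegree ≤ ρ s t) (s t : α) :
    (conv a b s t).natDegree ≤ ρ s t := by
  refine natDegree_sum_le_of_forall_le _ _ fun w hw => ?_
  obtain ⟨hsw, hwt⟩ := Finset.mem_Icc.1 hw
  rw [hρ.add hsw hwt]
  exact natDegree_mul_le_of_le (ha hsw) (hb hwt)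

lemma IsRightKLS.natDegree_le (hf : IsRightKLS ρ κ f) ⦃s t : α⦄ (h : s ≤ t) :
    (f s t).natDegree ≤ ρ s t :=
  natDegree_le_of_two_mul_natDegree_lt hf.diag hf.degLT h

lemma IsLeftKLS.natDegree_le (hg : IsLeftKLS ρ κ g) ⦃s t : α⦄ (h : s ≤ t) :
    (g s t).natDegree ≤ ρ s t :=
  natDegree_le_of_two_mul_natDegree_lt hg.diag hg.degLT h

lemma IsRightKLS.toIncidence_rev (hf : IsRightKLS ρ κ f) :
    toIncidence (rev ρ f) = toIncidence κ * toIncidence f := by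
  rw [← toIncidence_conv]
  ext1 s t h
  rw [toIncidence_apply h, toIncidence_apply h, hf.rev_eq h]

lemma IsLeftKLS.toIncidence_rev (hg : IsLeftKLS ρ κ g) :
    toIncidence (rev ρ g) = toIncidence g * toIncidence κ := by
  rw [← toIncidence_conv]
  ext1 s t h
  rw [toIncidence_apply h, toIncidence_apply h, hg.rev_eq h]

lemma IsChow.neg_red_mul (hH : IsChow κ H) : toIncidence (-red κ) * toIncidence H = 1 := by
  rw [← toIncidence_conv]
  ext1 s t h
  have := hH.left h
  simp only [conv, dlt] at this
  simp only [toIncidence_apply h, conv, Pi.neg_apply, neg_mul, sum_neg_distrib, this, neg_neg,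
    IncidenceAlgebra.one_apply]

lemma IsChow.mul_neg_red (hH : IsChow κ H) : toIncidence H * toIncidence (-red κ) = 1 := by
  rw [← toIncidence_conv]
  ext1 s t h
  have := hH.right h
  simp only [conv, dlt] at this
  simp only [toIncidence_apply h, conv, Pi.neg_apply, mul_neg, sum_neg_distrib, this, neg_neg,
    IncidenceAlgebra.one_apply]

lemma toIncidence_mul_rev_eq_rev_mul (hf : IsRightKLS ρ κ f) (hg : IsLeftKLS ρ κ g) :
    toIncidence g * toIncidence (rev ρ f) = toIncidence (rev ρ g) * toIncidence f := by
  rw [hf.toIncidence_rev, hg.toIncidence_rev, mul_assoc]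

lemma polySymm_conv_rev (hρ : IsWeakRank ρ) (hf : IsRightKLS ρ κ f) (hg : IsLeftKLS ρ κ g)
    {s t : α} (h : s ≤ t) : PolySymm (ρ s t) (conv (rev ρ g) f s t) := by
  refine ⟨natDegree_conv_le hρ (natDegree_rev_le hg.natDegree_le) hf.natDegree_le s t, ?_⟩
  calc rev ρ (conv (rev ρ g) f) s t
      = conv g (rev ρ f) s t := by
        rw [rev_conv hρ (natDegree_rev_le hg.natDegree_le) hf.natDegree_le]
        simp only [conv, rev, reflect_reflect]
    _ = conv (rev ρ g) f s t := by
        rw [← toIncidence_apply (a := conv g _) h, toIncidence_conv,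
          toIncidence_mul_rev_eq_rev_mul hf hg, ← toIncidence_conv, toIncidence_apply h]

/-- At `x = 1` the identity `κ^rev·κ = δ` becomes `κ² = δ`, and inductively only the two terms
`κ_{st}(1)` at the ends of `[s,t]` survive. -/
lemma IsKernel.isRoot_one (hρ : IsWeakRank ρ) (hκ : IsKernel ρ κ) {s t : α} (h : s < t) :
    (κ s t).IsRoot 1 := by
  induction hn : ρ s t using Nat.strong_induction_on generalizing t with
  | _ n ih =>
  have square_eq_zero : ∑ w ∈ Icc s t, (κ s w).eval 1 * (κ w t).eval 1 = 0 := by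
    have := congrArg (eval 1) (hκ.left h.le)
    rw [conv, dlt, if_neg h.ne, eval_finsetSum, eval_zero] at this
    rw [← this]
    refine sum_congr rfl fun w hw => ?_
    rw [eval_mul, rev, eval_one_reflect_s11 (hκ.degLE (Finset.mem_Icc.1 hw).1)]
  rw [sum_eq_add_of_mem s t (left_mem_Icc.2 h.le) (right_mem_Icc.2 h.le) h.ne] at square_eq_zero
  · simp only [hκ.diag, eval_one] at square_eq_zero
    rw [IsRoot.def]
    omega
  · intro w hw hw_ne
    obtain ⟨hsw, hwt⟩ := Finset.mem_Icc.1 hw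
    have := hρ.add hsw hwt
    have := hρ.pos (hwt.lt_of_ne hw_ne.2)
    rw [ih (ρ s w) (by omega) (hsw.lt_of_ne' hw_ne.1) rfl, zero_mul]

lemma IsKernel.toIncidence_eq (hρ : IsWeakRank ρ) (hκ : IsKernel ρ κ) :
    toIncidence κ = (1 - X : ℤ[X]) • toIncidence (-red κ) + (X : ℤ[X]) • 1 := by
  ext1 s t h
  simp only [IncidenceAlgebra.add_apply, IncidenceAlgebra.constSMul_apply, toIncidence_apply h,
    IncidenceAlgebra.one_apply, smul_eq_mul, Pi.neg_apply, red]
  rcases h.eq_or_lt with rfl | hlt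
  · rw [if_pos rfl, if_pos rfl, hκ.diag]
    ring
  · have divides := mul_divByMonic_eq_iff_isRoot.2 (hκ.isRoot_one hρ hlt)
    rw [C_1] at divides
    rw [if_neg hlt.ne, if_neg hlt.ne]
    linear_combination -divides

lemma IsLeftKLS.one_sub_X_smul_mul_neg_red (hρ : IsWeakRank ρ) (hκ : IsKernel ρ κ)
    (hg : IsLeftKLS ρ κ g) :
    (1 - X : ℤ[X]) • (toIncidence g * toIncidence (-red κ)) =
      toIncidence (rev ρ g) - (X : ℤ[X]) • toIncidence g := by
  rw [hg.toIncidence_rev, hκ.toIncidence_eq hρ, mul_add, mul_smul_comm, mul_smul_comm, mul_one,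
    add_sub_cancel_right]

lemma IsRightKLS.one_sub_X_smul_neg_red_mul (hρ : IsWeakRank ρ) (hκ : IsKernel ρ κ)
    (hf : IsRightKLS ρ κ f) :
    (1 - X : ℤ[X]) • (toIncidence (-red κ) * toIncidence f) =
      toIncidence (rev ρ f) - (X : ℤ[X]) • toIncidence f := by
  rw [hf.toIncidence_rev, hκ.toIncidence_eq hρ, add_mul, smul_mul_assoc, smul_mul_assoc, one_mul,
    add_sub_cancel_right]

lemma one_sub_apply_self_eq_zero (hρ : IsWeakRank ρ) (ha : ∀ s, a s s = 1)
    {γ : IncidenceAlgebra ℤ[X] α}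
    (hγ : (1 - X : ℤ[X]) • γ = toIncidence (rev ρ a) - (X : ℤ[X]) • toIncidence a) (s : α) :
    (1 - γ) s s = 0 := by
  have rank_self : ρ s s = 0 := by
    have := hρ.add (le_refl s) le_rfl
    omega
  have hγs := congr_fun (DFunLike.congr_fun hγ s) s
  simp only [IncidenceAlgebra.constSMul_apply, IncidenceAlgebra.sub_apply,
    toIncidence_apply le_rfl, rev, ha, rank_self, reflect_one, smul_eq_mul] at hγs
  apply X_sub_one_mul_cancel
  rw [IncidenceAlgebra.sub_apply, IncidenceAlgebra.one_apply, if_pos rfl]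
  linear_combination hγs

lemma one_sub_mem_entrywise_symmUnimodal (hρ : IsWeakRank ρ) (ha : ∀ s, a s s = 1)
    (hdeg : ∀ ⦃s t⦄, s < t → 2 * (a s t).natDegree < ρ s t)
    (hnonneg : ∀ s t, s ≤ t → PolyNonneg (a s t)) {γ : IncidenceAlgebra ℤ[X] α}
    (hγ : (1 - X : ℤ[X]) • γ = toIncidence (rev ρ a) - (X : ℤ[X]) • toIncidence a) :
    1 - γ ∈ entrywise ρ (symmUnimodal ℤ) := by
  intro s t h
  rcases h.eq_or_lt with rfl | hlt
  · rw [one_sub_apply_self_eq_zero hρ ha hγ]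
    exact zero_mem _
  obtain ⟨q, hq, hq_eq⟩ :=
    exists_mem_symmUnimodal_sub_one_mul_eq (hdeg hlt) (p := a s t) (hnonneg s t h)
  have hγst := congr_fun (DFunLike.congr_fun hγ s) t
  simp only [IncidenceAlgebra.constSMul_apply, IncidenceAlgebra.sub_apply, toIncidence_apply h,
    rev, smul_eq_mul] at hγst
  have entry_eq : (1 - γ) s t = q := by
    apply X_sub_one_mul_cancel
    rw [IncidenceAlgebra.sub_apply, IncidenceAlgebra.one_apply, if_neg hlt.ne]
    linear_combination hγst - hq_eq
  rwa [entry_eq]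

variable {S : ℕ → AddSubmonoid ℤ[X]} [SetLike.GradedMul S]

/-- Since `g·(-κ̄)·H·y = g·y`, it suffices that `1 - g·(-κ̄)` preserves the cone. -/
lemma IsChow.mul_mem_entrywise_of_left (hρ : IsWeakRank ρ) (hκ : IsKernel ρ κ)
    (hH : IsChow κ H) (hg : IsLeftKLS ρ κ g) (hg₀ : ∀ s t, s ≤ t → PolyNonneg (g s t))
    (hS : ∀ d, symmUnimodal ℤ d ≤ S d) {y : IncidenceAlgebra ℤ[X] α}
    (hy : toIncidence g * y ∈ entrywise ρ S) : toIncidence H * y ∈ entrywise ρ S := by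
  have hγ := hg.one_sub_X_smul_mul_neg_red hρ hκ
  have hc := one_sub_mem_entrywise_symmUnimodal hρ hg.diag hg.degLT hg₀ hγ
  refine mem_entrywise_of_one_sub_mul_mem hρ (one_sub_apply_self_eq_zero hρ hg.diag hγ)
    (fun _ => mul_mem_entrywise hρ fun s t hst => hS _ (hc s t hst)) ?_
  rwa [sub_sub_cancel, mul_assoc, ← mul_assoc _ _ y, hH.neg_red_mul, one_mul]

lemma IsChow.mul_mem_entrywise_of_right (hρ : IsWeakRank ρ) (hκ : IsKernel ρ κ)
    (hH : IsChow κ H) (hf : IsRightKLS ρ κ f) (hf₀ : ∀ s t, s ≤ t → PolyNonneg (f s t))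
    (hS : ∀ d, symmUnimodal ℤ d ≤ S d) {y : IncidenceAlgebra ℤ[X] α}
    (hy : y * toIncidence f ∈ entrywise ρ S) : y * toIncidence H ∈ entrywise ρ S := by
  have hγ := hf.one_sub_X_smul_neg_red_mul hρ hκ
  have hc := one_sub_mem_entrywise_symmUnimodal hρ hf.diag hf.degLT hf₀ hγ
  refine mem_entrywise_of_mul_one_sub_mem hρ (one_sub_apply_self_eq_zero hρ hf.diag hγ)
    (fun _ hb => mul_mem_entrywise hρ hb fun s t hst => hS _ (hc s t hst)) ?_
  rwa [sub_sub_cancel, mul_assoc, ← mul_assoc _ _ (toIncidence f), hH.mul_neg_red, one_mul]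

lemma IsChow.nonneg_of_right (hρ : IsWeakRank ρ) (hκ : IsKernel ρ κ) (hH : IsChow κ H)
    (hf : IsRightKLS ρ κ f) (hf₀ : ∀ s t, s ≤ t → PolyNonneg (f s t)) :
    ∀ s t, s ≤ t → PolyNonneg (H s t) := by
  have := hH.mul_mem_entrywise_of_right (y := 1) hρ hκ hf hf₀
    (fun _ => symmUnimodal_le_nonnegCoeffs)
    (by rw [one_mul]; exact toIncidence_mem_entrywise.2 hf₀)
  rwa [one_mul, toIncidence_mem_entrywise] at this

lemma IsChow.nonneg_of_left (hρ : IsWeakRank ρ) (hκ : IsKernel ρ κ) (hH : IsChow κ H)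
    (hg : IsLeftKLS ρ κ g) (hg₀ : ∀ s t, s ≤ t → PolyNonneg (g s t)) :
    ∀ s t, s ≤ t → PolyNonneg (H s t) := by
  have := hH.mul_mem_entrywise_of_left (y := 1) hρ hκ hg hg₀
    (fun _ => symmUnimodal_le_nonnegCoeffs)
    (by rw [mul_one]; exact toIncidence_mem_entrywise.2 hg₀)
  rwa [mul_one, toIncidence_mem_entrywise] at this

lemma conv_nonneg (ha : ∀ s t, s ≤ t → PolyNonneg (a s t))
    (hb : ∀ s t, s ≤ t → PolyNonneg (b s t)) (s t : α) : PolyNonneg (conv a b s t) :=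
  (nonnegCoeffs ℤ).sum_mem fun w hw =>
    mul_mem (ha s w (Finset.mem_Icc.1 hw).1) (hb w t (Finset.mem_Icc.1 hw).2)

lemma right_augmented_chow_nonneg (hρ : IsWeakRank ρ) (hκ : IsKernel ρ κ) (hH : IsChow κ H)
    (hf : IsRightKLS ρ κ f) (hf₀ : ∀ s t, s ≤ t → PolyNonneg (f s t)) (s t : α) :
    PolyNonneg (conv H (rev ρ f) s t) :=
  conv_nonneg (hH.nonneg_of_right hρ hκ hf hf₀)
    (fun s t h => reflect_mem_nonnegCoeffs (hf₀ s t h) _) s t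

lemma left_augmented_chow_nonneg (hρ : IsWeakRank ρ) (hκ : IsKernel ρ κ) (hH : IsChow κ H)
    (hg : IsLeftKLS ρ κ g) (hg₀ : ∀ s t, s ≤ t → PolyNonneg (g s t)) (s t : α) :
    PolyNonneg (conv (rev ρ g) H s t) :=
  conv_nonneg (fun s t h => reflect_mem_nonnegCoeffs (hg₀ s t h) _)
    (hH.nonneg_of_left hρ hκ hg hg₀) s t

lemma right_augmented_chow_mem_symmUnimodal (hρ : IsWeakRank ρ) (hκ : IsKernel ρ κ)
    (hH : IsChow κ H) (hf : IsRightKLS ρ κ f) (hg : IsLeftKLS ρ κ g)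
    (hZ : ∀ s t, s ≤ t → conv (rev ρ g) f s t ∈ symmUnimodal ℤ (ρ s t))
    (hg₀ : ∀ s t, s ≤ t → PolyNonneg (g s t)) :
    ∀ s t, s ≤ t → conv H (rev ρ f) s t ∈ symmUnimodal ℤ (ρ s t) := by
  rw [← toIncidence_mem_entrywise (S := symmUnimodal ℤ), toIncidence_conv] at hZ ⊢
  refine hH.mul_mem_entrywise_of_left hρ hκ hg hg₀ (fun _ => le_rfl) ?_
  rwa [toIncidence_mul_rev_eq_rev_mul hf hg]

lemma left_augmented_chow_mem_symmUnimodal (hρ : IsWeakRank ρ) (hκ : IsKernel ρ κ)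
    (hH : IsChow κ H) (hf : IsRightKLS ρ κ f)
    (hZ : ∀ s t, s ≤ t → conv (rev ρ g) f s t ∈ symmUnimodal ℤ (ρ s t))
    (hf₀ : ∀ s t, s ≤ t → PolyNonneg (f s t)) :
    ∀ s t, s ≤ t → conv (rev ρ g) H s t ∈ symmUnimodal ℤ (ρ s t) := by
  rw [← toIncidence_mem_entrywise (S := symmUnimodal ℤ), toIncidence_conv] at hZ ⊢
  exact hH.mul_mem_entrywise_of_right hρ hκ hf hf₀ (fun _ => le_rfl) hZ

end KLS

/-- Theorem 3.17: (i) if `f` (resp. `g`) is non-negative then the right (resp. left) augmented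
Chow function `F = ℋ·f^rev` (resp. `G = g^rev·ℋ`) is non-negative; (ii) if the `Z`-function
`Z = g^rev·f` is non-negative and unimodal and `g` (resp. `f`) is non-negative, then `F`
(resp. `G`) is unimodal. -/
theorem augmented_chow_nonneg_unimodal [PartialOrder α] [LocallyFiniteOrder α]
    (ρ : α → α → ℕ) (hρ : IsWeakRank ρ)
    (κ : α → α → Polynomial ℤ) (hκ : IsKernel ρ κ)
    (H : α → α → Polynomial ℤ) (hH : IsChow κ H)
    (f : α → α → Polynomial ℤ) (hf : IsRightKLS ρ κ f)
    (g : α → α → Polynomial ℤ) (hg : IsLeftKLS ρ κ g) :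
    ((∀ s t : α, s ≤ t → PolyNonneg (f s t)) →
      ∀ s t : α, s ≤ t → PolyNonneg (conv H (rev ρ f) s t)) ∧
    ((∀ s t : α, s ≤ t → PolyNonneg (g s t)) →
      ∀ s t : α, s ≤ t → PolyNonneg (conv (rev ρ g) H s t)) ∧
    ((∀ s t : α, s ≤ t →
        PolyNonneg (conv (rev ρ g) f s t) ∧ PolyUnimodal (conv (rev ρ g) f s t)) →
      (∀ s t : α, s ≤ t → PolyNonneg (g s t)) →
      ∀ s t : α, s ≤ t → PolyUnimodal (conv H (rev ρ f) s t)) ∧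
    ((∀ s t : α, s ≤ t →
        PolyNonneg (conv (rev ρ g) f s t) ∧ PolyUnimodal (conv (rev ρ g) f s t)) →
      (∀ s t : α, s ≤ t → PolyNonneg (f s t)) →
      ∀ s t : α, s ≤ t → PolyUnimodal (conv (rev ρ g) H s t)) := by
  have Z_mem (hZ : ∀ s t : α, s ≤ t →
      PolyNonneg (conv (rev ρ g) f s t) ∧ PolyUnimodal (conv (rev ρ g) f s t))
      (s t : α) (h : s ≤ t) : conv (rev ρ g) f s t ∈ symmUnimodal ℤ (ρ s t) :=
    (polySymm_conv_rev hρ hf hg h).mem_symmUnimodal (hZ s t h).1 (hZ s t h).2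
  refine ⟨fun hf₀ s t _ => ?_, fun hg₀ s t _ => ?_, fun hZ hg₀ s t h => ?_,
    fun hZ hf₀ s t h => ?_⟩
  · exact right_augmented_chow_nonneg hρ hκ hH hf hf₀ s t
  · exact left_augmented_chow_nonneg hρ hκ hH hg hg₀ s t
  · exact polyUnimodal_of_mem_symmUnimodal
      (right_augmented_chow_mem_symmUnimodal hρ hκ hH hf hg (Z_mem hZ) hg₀ s t h)
  · exact polyUnimodal_of_mem_symmUnimodal
      (left_augmented_chow_mem_symmUnimodal hρ hκ hH hf (Z_mem hZ) hf₀ s t h)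
end

section
/- Let P be a finite graded bounded poset. The χ-Chow polynomial of P is given by the chain expansion ℋ_P(x) = Σ over all chains 0̂ = p_0 < p_1 < ⋯ < p_m ≤ 1̂ (m ≥ 0) of the product Π_{i=1}^{m} x·(x^{ρ(p_i) − ρ(p_{i−1}) − 1} − 1)/(x − 1). -/
/-!
Since `χ = μ·ζ^rev`, multiplying by `ζ` gives `ζ·χ = ζ^rev`. As `(x - 1) χ̄ = χ` off the diagonal,
where `χ` vanishes at `1`, it follows that `ζ·χ̄` is `-1` on the diagonal and
`φ_{st} = (x^{ρ_{st}} - x)/(x - 1)` for `s < t`. Multiplying `χ̄·ℋ = -δ` by `ζ` therefore yields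
the recursion `ℋ_{st} = 1 + Σ_{s < w ≤ t} φ_{sw} ℋ_{wt}`. Unrolled, it expresses `ℋ_{st}` as the
sum over all chains from `s` inside `[s, t]` of the product of the `φ`-weights of their steps.
-/

open Finset Polynomial
open scoped Classical

noncomputable section

variable {α : Type*}

/-- `mu` is the Möbius function of the poset: `mu = ζ⁻¹`. -/
def IsMobius [PartialOrder α] [LocallyFiniteOrder α] (mu : α → α → ℤ) : Prop :=
  (∀ s : α, mu s s = 1) ∧
  (∀ ⦃s t : α⦄, s < t → ∑ w ∈ Finset.Icc s t, mu s w = 0) ∧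
  (∀ ⦃s t : α⦄, s < t → ∑ w ∈ Finset.Icc s t, mu w t = 0)

/-- The characteristic function `χ = μ·ζ^rev`, i.e. `χ_{st}(x) = Σ_{s≤w≤t} μ_{sw} x^{ρ_{wt}}`. -/
def chi [PartialOrder α] [LocallyFiniteOrder α] (ρ : α → α → ℕ) (mu : α → α → ℤ) :
    α → α → Polynomial ℤ :=
  fun s t => ∑ w ∈ Finset.Icc s t, Polynomial.C (mu s w) * X ^ ρ w t

/-- Convolution `ζ^rev · a`, where `ζ^rev_{sw} = x^{ρ_{sw}}`.  Applied to the Chow function `H`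
of the kernel `χ` (whose left KLS function is `g = ζ`) it gives the left augmented Chow function
`G = g^rev · H`; applied to the right KLS function `f` it gives the `Z`-function `Z = g^rev·f`. -/
def zrevConv [PartialOrder α] [LocallyFiniteOrder α] (ρ : α → α → ℕ)
    (a : α → α → Polynomial ℤ) : α → α → Polynomial ℤ :=
  fun s t => ∑ w ∈ Finset.Icc s t, X ^ ρ s w * a w t

/-- `rk` witnesses that the finite bounded poset is graded: covering relations increase `rk`
by exactly one, `rk` is strictly monotone (automatic in the finite graded case), and `rk ⊥ = 0`. -/
structure GradedData [PartialOrder α] [BoundedOrder α] (rk : α → ℕ) : Prop where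
  cov : ∀ ⦃a b : α⦄, a ⋖ b → rk b = rk a + 1
  mono : StrictMono rk
  bot : rk (⊥ : α) = 0

/-- The weak rank function `ρ_{st} = rk t - rk s` induced by a rank function `rk`. -/
def rdiff (rk : α → ℕ) : α → α → ℕ := fun a b => rk b - rk a

end

section Chains

variable {α R : Type*} [PartialOrder α] [LocallyFiniteOrder α] [CommSemiring R]

/-- The chains `s = p_0 < p_1 < ⋯ < p_m ≤ t` with exactly `m` steps. They are cut out of the
functions into `[s, t]`, a finite set even when the poset is only locally finite. -/
noncomputable def chains (s t : α) (m : ℕ) : Finset (Fin (m + 1) → α) :=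
  {p ∈ Fintype.piFinset fun _ => Icc s t | StrictMono p ∧ p 0 = s}

/-- The sum of the weights of the chains in `chains s t m`, where the weight of a chain is the
product of the weights `a p_{i-1} p_i` of its steps. -/
noncomputable def chainSum (a : α → α → R) (s t : α) (m : ℕ) : R :=
  ∑ p ∈ chains s t m, ∏ i : Fin m, a (p i.castSucc) (p i.succ)

lemma mem_chains {s t : α} {m : ℕ} {p : Fin (m + 1) → α} :
    p ∈ chains s t m ↔ StrictMono p ∧ p 0 = s ∧ p (Fin.last m) ≤ t := by
  simp only [chains, mem_filter, Fintype.mem_piFinset, mem_Icc]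
  constructor
  · rintro ⟨hmem, hp, h0⟩
    exact ⟨hp, h0, (hmem _).2⟩
  · rintro ⟨hp, rfl, hlast⟩
    exact ⟨fun i => ⟨hp.monotone i.zero_le, (hp.monotone i.le_last).trans hlast⟩, hp, rfl⟩

lemma chains_zero {s t : α} (hst : s ≤ t) : chains s t 0 = {fun _ => s} := by
  ext p
  rw [mem_chains, mem_singleton, funext_iff, Fin.forall_fin_one]
  constructor
  · exact fun hp => hp.2.1
  · exact fun h0 => ⟨fun i j hij => absurd hij (by omega), h0, h0.trans_le hst⟩

lemma mem_chains_succ {s t : α} {m : ℕ} {p : Fin (m + 2) → α} :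
    p ∈ chains s t (m + 1) ↔ p 0 = s ∧ p 1 ∈ Ioc s t ∧ Fin.tail p ∈ chains (p 1) t m := by
  have hcons : StrictMono p ↔ p 0 < p 1 ∧ StrictMono (Fin.tail p) := by
    conv_lhs => rw [← Fin.cons_self_tail p]
    exact strictMono_vecCons
  rw [mem_chains, mem_chains, mem_Ioc]
  constructor
  · rintro ⟨hp, rfl, hlast⟩
    obtain ⟨h01, htail⟩ := hcons.1 hp
    exact ⟨rfl, ⟨h01, (hp.monotone (Fin.le_last 1)).trans hlast⟩, htail, rfl, hlast⟩
  · rintro ⟨rfl, ⟨h01, -⟩, htail, -, hlast⟩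
    exact ⟨hcons.2 ⟨h01, htail⟩, rfl, hlast⟩

lemma sum_chains_succ {M : Type*} [AddCommMonoid M] {m : ℕ} (f : (Fin (m + 2) → α) → M)
    (s t : α) :
    ∑ p ∈ chains s t (m + 1), f p = ∑ w ∈ Ioc s t, ∑ q ∈ chains w t m, f (Fin.cons s q) := by
  rw [sum_sigma']
  refine sum_bij' (fun p _ => ⟨p 1, Fin.tail p⟩) (fun q _ => Fin.cons s q.2) ?_ ?_ ?_ ?_ ?_
  · exact fun p hp => mem_sigma.2 (mem_chains_succ.1 hp).2
  · rintro ⟨w, q⟩ hwq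
    obtain ⟨hw, hq⟩ : w ∈ Ioc s t ∧ q ∈ chains w t m := mem_sigma.1 hwq
    obtain ⟨-, rfl, -⟩ := mem_chains.1 hq
    exact mem_chains_succ.2 ⟨rfl, hw, hq⟩
  · intro p hp
    obtain ⟨rfl, -⟩ := mem_chains_succ.1 hp
    exact Fin.cons_self_tail p
  · rintro ⟨w, q⟩ hwq
    have hq : q ∈ chains w t m := (mem_sigma.1 hwq).2
    obtain ⟨-, rfl, -⟩ := mem_chains.1 hq
    rfl
  · intro p hp
    obtain ⟨rfl, -⟩ := mem_chains_succ.1 hp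
    rw [Fin.cons_self_tail]

lemma chainSum_zero (a : α → α → R) {s t : α} (hst : s ≤ t) : chainSum a s t 0 = 1 := by
  simp [chainSum, chains_zero hst]

lemma chainSum_succ (a : α → α → R) (s t : α) (m : ℕ) :
    chainSum a s t (m + 1) = ∑ w ∈ Ioc s t, a s w * chainSum a w t m := by
  simp_rw [chainSum, sum_chains_succ, mul_sum]
  refine sum_congr rfl fun w _ => sum_congr rfl fun q hq => ?_
  rw [Fin.prod_univ_succ, ← (mem_chains.1 hq).2.1]
  rfl

/-- Unrolling the recursion `N` times visits all chains as soon as `N` is at least the number of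
elements of `[s, t]`. -/
theorem eq_sum_chainSum_of_recursion {a : α → α → R} {f : α → R} {t : α}
    (hf : ∀ s ≤ t, f s = 1 + ∑ w ∈ Ioc s t, a s w * f w) {N : ℕ} {s : α} (hst : s ≤ t)
    (hN : #(Icc s t) ≤ N) :
    f s = ∑ m ∈ range N, chainSum a s t m := by
  induction N generalizing s with
  | zero => exact absurd hN (by simpa using hst)
  | succ N ih =>
    have ih_above : ∀ w ∈ Ioc s t, f w = ∑ m ∈ range N, chainSum a w t m := by
      intro w hw
      obtain ⟨hsw, hwt⟩ := mem_Ioc.1 hw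
      have hcard := card_lt_card (Icc_ssubset_Icc_left hst hsw le_rfl)
      exact ih hwt (by omega)
    calc
      f s = 1 + ∑ w ∈ Ioc s t, a s w * ∑ m ∈ range N, chainSum a w t m := by
        rw [hf s hst, sum_congr rfl fun w hw => by rw [ih_above w hw]]
      _ = chainSum a s t 0 + ∑ m ∈ range N, chainSum a s t (m + 1) := by
        simp_rw [chainSum_zero a hst, chainSum_succ, mul_sum]
        rw [sum_comm]
      _ = ∑ m ∈ range (N + 1), chainSum a s t m := by
        rw [sum_range_succ', add_comm]

end Chains

section ChowRecursion

variable {α : Type*} [PartialOrder α]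

/-- The weight `x (x^{k-1} - 1)/(x - 1) = x (1 + x + ⋯ + x^{k-2})` of a step of rank `k ≥ 1` in
a chain. At `k = 0` the truncated subtraction makes it `0`, whereas the fraction is `-1`. -/
noncomputable def stepWeight (k : ℕ) : ℤ[X] :=
  X * ∑ j ∈ range (k - 1), X ^ j

lemma X_sub_one_mul_stepWeight {k : ℕ} (hk : 0 < k) : (X - 1) * stepWeight k = X ^ k - X := by
  rw [stepWeight, mul_left_comm, mul_geom_sum, mul_sub_one, mul_pow_sub_one hk.ne']

lemma IsWeakRank.self_eq_zero {ρ : α → α → ℕ} (hρ : IsWeakRank ρ) (s : α) : ρ s s = 0 := by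
  have hadd := hρ.add (le_refl s) (le_refl s)
  omega

lemma isWeakRank_rdiff {rk : α → ℕ} (hrk : StrictMono rk) : IsWeakRank (rdiff rk) where
  pos _ _ hst := Nat.sub_pos_of_lt (hrk hst)
  add s w t hsw hwt := by
    have hrk_sw := hrk.monotone hsw
    have hrk_wt := hrk.monotone hwt
    simp only [rdiff]
    omega

variable [LocallyFiniteOrder α] {ρ : α → α → ℕ} {mu : α → α → ℤ}

/-- The associativity `ζ·(a·b) = (ζ·a)·b` in the incidence algebra. -/
lemma sum_Icc_conv (a b : α → α → ℤ[X]) (s t : α) :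
    ∑ w ∈ Icc s t, conv a b w t = ∑ v ∈ Icc s t, (∑ w ∈ Icc s v, a w v) * b v t := by
  simp_rw [conv, sum_mul]
  refine sum_comm' fun w v => ?_
  simp only [mem_Icc]
  grind

lemma IsMobius.sum_Icc_left (hmu : IsMobius mu) {s t : α} (hst : s ≤ t) :
    ∑ w ∈ Icc s t, mu w t = if s = t then 1 else 0 := by
  split_ifs with h
  · simp [h, hmu.1]
  · exact hmu.2.2 (hst.lt_of_ne h)

lemma IsMobius.sum_Icc_chi (hmu : IsMobius mu) (ρ : α → α → ℕ) {s t : α} (hst : s ≤ t) :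
    ∑ w ∈ Icc s t, chi ρ mu w t = X ^ ρ s t := by
  calc
    ∑ w ∈ Icc s t, chi ρ mu w t
      = ∑ v ∈ Icc s t, (∑ w ∈ Icc s v, C (mu w v)) * X ^ ρ v t :=
        sum_Icc_conv (fun w v => C (mu w v)) (fun v u => X ^ ρ v u) s t
    _ = ∑ v ∈ Icc s t, if s = v then X ^ ρ v t else 0 := by
      refine sum_congr rfl fun v hv => ?_
      rw [← map_sum, hmu.sum_Icc_left (mem_Icc.1 hv).1]
      split_ifs <;> simp
    _ = X ^ ρ s t := by
      rw [sum_ite_eq, if_pos (left_mem_Icc.2 hst)]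

lemma IsMobius.chi_self (hmu : IsMobius mu) (hρ : IsWeakRank ρ) (s : α) : chi ρ mu s s = 1 := by
  simp [chi, hmu.1, hρ.self_eq_zero]

lemma IsMobius.X_sub_one_mul_red_chi (hmu : IsMobius mu) (ρ : α → α → ℕ) {s t : α} (hst : s < t) :
    (X - 1) * red (chi ρ mu) s t = chi ρ mu s t := by
  have hroot : (chi ρ mu s t).IsRoot 1 := by
    simpa [chi, eval_finsetSum] using hmu.2.1 hst
  simpa [red, hst.ne] using mul_divByMonic_eq_iff_isRoot.2 hroot

lemma IsMobius.sum_Icc_red_chi (hmu : IsMobius mu) (hρ : IsWeakRank ρ) {s t : α} (hst : s < t) :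
    ∑ w ∈ Icc s t, red (chi ρ mu) w t = stepWeight (ρ s t) := by
  have hX : (X - 1 : ℤ[X]) ≠ 0 := X_sub_C_ne_zero 1
  have hchi : ∑ w ∈ Ico s t, chi ρ mu w t = X ^ ρ s t - 1 := by
    rw [eq_sub_iff_add_eq, ← hmu.chi_self hρ t, sum_Ico_add_eq_sum_Icc hst.le,
      hmu.sum_Icc_chi ρ hst.le]
  refine mul_left_cancel₀ hX ?_
  calc
    (X - 1) * ∑ w ∈ Icc s t, red (chi ρ mu) w t
      = ∑ w ∈ Ico s t, (X - 1) * red (chi ρ mu) w t + (X - 1) * red (chi ρ mu) t t := by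
        rw [← sum_Ico_add_eq_sum_Icc hst.le, mul_add, mul_sum]
    _ = ∑ w ∈ Ico s t, chi ρ mu w t - (X - 1) := by
      rw [sum_congr rfl fun w hw => hmu.X_sub_one_mul_red_chi ρ (mem_Ico.1 hw).2]
      simp only [red, if_true]
      ring
    _ = (X - 1) * stepWeight (ρ s t) := by
      rw [hchi, X_sub_one_mul_stepWeight (hρ.pos hst)]
      ring

/-- The identity `(ζ·χ̄)·ℋ = -ζ`, solved for its term `ℋ_{st}`. -/
lemma IsChow.eq_one_add_sum_Ioc {H : α → α → ℤ[X]} (hH : IsChow (chi ρ mu) H)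
    (hmu : IsMobius mu) (hρ : IsWeakRank ρ) {s t : α} (hst : s ≤ t) :
    H s t = 1 + ∑ w ∈ Ioc s t, stepWeight (ρ s w) * H w t := by
  have hneg : ∑ w ∈ Icc s t, conv (red (chi ρ mu)) H w t = -1 := by
    rw [sum_congr rfl fun w hw => hH.left (mem_Icc.1 hw).2]
    simp [dlt, hst]
  have hexpand : ∑ w ∈ Icc s t, conv (red (chi ρ mu)) H w t
      = -H s t + ∑ w ∈ Ioc s t, stepWeight (ρ s w) * H w t := by
    rw [sum_Icc_conv, ← add_sum_Ioc_eq_sum_Icc hst]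
    congr 1
    · simp [red]
    · exact sum_congr rfl fun w hw => by rw [hmu.sum_Icc_red_chi hρ (mem_Ioc.1 hw).1]
  linear_combination hexpand - hneg

end ChowRecursion

theorem chi_chow_chain_expansion_general {α : Type*} [PartialOrder α] [LocallyFiniteOrder α]
    {ρ : α → α → ℕ} (hρ : IsWeakRank ρ) {mu : α → α → ℤ} (hmu : IsMobius mu)
    {H : α → α → ℤ[X]} (hH : IsChow (chi ρ mu) H) {s t : α} (hst : s ≤ t) :
    H s t = ∑ m ∈ range #(Icc s t), ∑ p ∈ chains s t m,
      ∏ i : Fin m, stepWeight (ρ (p i.castSucc) (p i.succ)) :=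
  eq_sum_chainSum_of_recursion (a := fun v w => stepWeight (ρ v w)) (f := fun v => H v t)
    (fun _ hs => hH.eq_one_add_sum_Ioc hmu hρ hs) hst le_rfl

/-- Theorem 4.4: for a finite graded bounded poset, the `χ`-Chow polynomial is
`ℋ_P(x) = Σ_{0̂ = p_0 < p_1 < ⋯ < p_m ≤ 1̂} Π_{i=1}^m x (x^{ρ(p_i)-ρ(p_{i-1})-1} - 1)/(x-1)`;
each factor `x (x^{k-1}-1)/(x-1)` is written as the polynomial `x·(1 + x + ⋯ + x^{k-2})`. -/
theorem chi_chow_chain_expansion {α : Type*}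
    [PartialOrder α] [BoundedOrder α] [Fintype α] [LocallyFiniteOrder α]
    (rk : α → ℕ) (hg : GradedData rk)
    (mu : α → α → ℤ) (hmu : IsMobius mu)
    (H : α → α → Polynomial ℤ) (hH : IsChow (chi (rdiff rk) mu) H) :
    H ⊥ ⊤ = ∑ m ∈ Finset.range (Fintype.card α),
      ∑ p ∈ Finset.univ.filter (fun p : Fin (m + 1) → α => StrictMono p ∧ p 0 = ⊥),
        ∏ i : Fin m,
          (X * ∑ j ∈ Finset.range (rk (p i.succ) - rk (p i.castSucc) - 1), X ^ j) := by
  simpa [chains, stepWeight, rdiff] using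
    chi_chow_chain_expansion_general (isWeakRank_rdiff hg.mono) hmu hH (bot_le (a := ⊤))
end

section
/- Let P be a finite graded bounded poset and let aug(P) be the poset obtained from P by adjoining a new minimum element. Then the left χ-augmented Chow polynomial of P equals the χ-Chow polynomial of aug(P): G_P(x) = ℋ_{aug(P)}(x). -/
open Finset Polynomial
open scoped Classical

/-!
Write `i` for the inclusion of `P` in `R = aug(P)`. Its range is order-convex, so intervals of `P`
are intervals of `R`; since Möbius and Chow functions are inverses in the incidence algebra, their
values on an interval are determined by that interval, whence `ℋ_R(i p, i q) = ℋ_P(p, q)`. The new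
minimum is covered only by `i ⊥`, so `μ_R(⊥, ·)` is `-1` at `i ⊥` and vanishes at all other
elements above `⊥`. Hence `χ_R(⊥, i p) = x^(ρ(p) + 1) - x^ρ(p)`, whose reduction is `x^ρ(p)`, and
the equation `χ̄ · ℋ = -δ` at `(⊥, i q)` becomes `ℋ_R(⊥, i q) = ∑_p x^ρ(p) ℋ_P(p, q)`.
-/

section IncidenceFunctions

variable {α : Type*} [PartialOrder α]

theorem isRightRegular_red_self (κ : α → α → ℤ[X]) (s : α) : IsRightRegular (red κ s s) := by
  rw [red, if_pos rfl]
  exact isUnit_one.neg.isRegular.right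

variable [LocallyFiniteOrder α]

/- Solving for `f` upwards from `s`: the equations are triangular, with diagonal maps `φ t t`. For
`φ w t x = x * c w t` this is right cancellation of `c` in the incidence algebra. -/
theorem eq_of_sum_Icc_apply_eq {A B : Type*} [AddCancelCommMonoid B] {φ : α → α → A → B}
    (hφ : ∀ t, (φ t t).Injective) {s : α} {f g : α → A}
    (hfg : ∀ t, s ≤ t → ∑ w ∈ Icc s t, φ w t (f w) = ∑ w ∈ Icc s t, φ w t (g w))
    {t : α} (hst : s ≤ t) : f t = g t := by
  induction hn : #(Icc s t) using Nat.strong_induction_on generalizing t with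
  | _ n ih =>
    have h_below : ∑ w ∈ Ico s t, φ w t (f w) = ∑ w ∈ Ico s t, φ w t (g w) := by
      refine sum_congr rfl fun w hw => ?_
      obtain ⟨hsw, hwt⟩ := mem_Ico.1 hw
      rw [ih _ (hn ▸ card_lt_card (Icc_ssubset_Icc_right hst le_rfl hwt)) hsw rfl]
    have h_all := hfg t hst
    rw [← sum_Ico_add_eq_sum_Icc hst, ← sum_Ico_add_eq_sum_Icc hst, h_below] at h_all
    exact hφ t (add_left_cancel h_all)

theorem eq_of_sum_Icc_eq {A : Type*} [AddCancelCommMonoid A] {f g : α → A} {s : α}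
    (hfg : ∀ t, s ≤ t → ∑ w ∈ Icc s t, f w = ∑ w ∈ Icc s t, g w) {t : α} (hst : s ≤ t) :
    f t = g t :=
  eq_of_sum_Icc_apply_eq (φ := fun _ _ => id) (fun _ => Function.injective_id) hfg hst

theorem IsMobius.sum_Icc {mu : α → α → ℤ} (hmu : IsMobius mu) {s t : α} (hst : s ≤ t) :
    ∑ w ∈ Icc s t, mu s w = if s = t then 1 else 0 := by
  obtain rfl | hlt := hst.eq_or_lt
  · simp [hmu.1]
  · rw [if_neg hlt.ne, hmu.2.1 hlt]

theorem IsChow.eq_sum_Ioc {κ H : α → α → ℤ[X]} (hH : IsChow κ H) {s t : α} (hst : s < t) :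
    H s t = ∑ w ∈ Ioc s t, red κ s w * H w t := by
  have h_conv := hH.left hst.le
  rw [conv, ← add_sum_Ioc_eq_sum_Icc hst.le, dlt, if_neg hst.ne, red, if_pos rfl] at h_conv
  linear_combination -h_conv

end IncidenceFunctions

section ConvexEmbedding

variable {P R : Type*} [PartialOrder P] [LocallyFiniteOrder P] [PartialOrder R]
  [LocallyFiniteOrder R] {i : P ↪o R}

theorem sum_Icc_embedding (hi : (Set.range i).OrdConnected) {M : Type*} [AddCommMonoid M]
    (f : R → M) (p q : P) : ∑ r ∈ Icc (i p) (i q), f r = ∑ w ∈ Icc p q, f (i w) := by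
  have h_map : Icc (i p) (i q) = (Icc p q).map i.toEmbedding :=
    coe_injective (by simpa using (i.image_Icc hi p q).symm)
  rw [h_map, sum_map]
  rfl

theorem IsMobius.embedding_apply {muP : P → P → ℤ} (hP : IsMobius muP) {muR : R → R → ℤ}
    (hR : IsMobius muR) (hi : (Set.range i).OrdConnected) {p q : P} (hpq : p ≤ q) :
    muR (i p) (i q) = muP p q := by
  refine eq_of_sum_Icc_eq (f := fun w => muR (i p) (i w)) (fun t hpt => ?_) hpq
  rw [← sum_Icc_embedding hi (muR (i p)), hR.sum_Icc (i.le_iff_le.2 hpt), hP.sum_Icc hpt]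
  simp only [i.eq_iff_eq]

theorem IsMobius.chi_embedding_apply {muP : P → P → ℤ} (hP : IsMobius muP) {muR : R → R → ℤ}
    (hR : IsMobius muR) (hi : (Set.range i).OrdConnected) {ρP : P → P → ℕ} {ρR : R → R → ℕ}
    (hρ : ∀ ⦃p q⦄, p ≤ q → ρR (i p) (i q) = ρP p q) (p q : P) :
    chi ρR muR (i p) (i q) = chi ρP muP p q := by
  rw [chi, chi, sum_Icc_embedding hi]
  refine sum_congr rfl fun w hw => ?_
  obtain ⟨hpw, hwq⟩ := mem_Icc.1 hw
  rw [hP.embedding_apply hR hi hpw, hρ hwq]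

theorem IsChow.embedding_apply {κP HP : P → P → ℤ[X]} (hP : IsChow κP HP)
    {κR HR : R → R → ℤ[X]} (hR : IsChow κR HR) (hi : (Set.range i).OrdConnected)
    (hκ : ∀ p q, κR (i p) (i q) = κP p q) {p q : P} (hpq : p ≤ q) :
    HR (i p) (i q) = HP p q := by
  have h_red (w t : P) : red κR (i w) (i t) = red κP w t := by
    simp only [red, i.eq_iff_eq, hκ]
  refine eq_of_sum_Icc_apply_eq (φ := fun w t x => x * red κP w t) (f := fun w => HR (i p) (i w))
    (isRightRegular_red_self κP) (fun t hpt => ?_) hpq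
  calc ∑ w ∈ Icc p t, HR (i p) (i w) * red κP w t
      = conv HR (red κR) (i p) (i t) := by simp only [conv, sum_Icc_embedding hi, h_red]
    _ = -dlt p t := by rw [hR.right (i.le_iff_le.2 hpt), dlt, dlt]; simp only [i.eq_iff_eq]
    _ = ∑ w ∈ Icc p t, HP p w * red κP w t := (hP.right hpt).symm

end ConvexEmbedding

section UniqueCover

variable {α : Type*} [PartialOrder α] {s b : α}

theorem Ioi_eq_Ici_of_range_eq {P : Type*} [PartialOrder P] [OrderBot P] {i : P ↪o α}
    (hi : Set.range i = Set.Ioi s) : Set.Ioi s = Set.Ici (i ⊥) := by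
  ext r
  constructor
  · intro hr
    obtain ⟨p, rfl⟩ := hi.ge hr
    exact i.monotone bot_le
  · exact (hi.le ⟨⊥, rfl⟩ : s < i ⊥).trans_le

theorem covBy_of_Ioi_eq_Ici (h : Set.Ioi s = Set.Ici b) : s ⋖ b :=
  ⟨h.ge Set.self_mem_Ici, fun _ hsc hcb => (h.le hsc).not_gt hcb⟩

variable [LocallyFiniteOrder α]

theorem Ioc_eq_Icc_of_Ioi_eq_Ici (h : Set.Ioi s = Set.Ici b) (t : α) : Ioc s t = Icc b t :=
  coe_injective (by rw [coe_Ioc, coe_Icc, ← Set.Ioi_inter_Iic, h, Set.Ici_inter_Iic])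

theorem IsMobius.eq_of_Ioi_eq_Ici {mu : α → α → ℤ} (hmu : IsMobius mu)
    (h : Set.Ioi s = Set.Ici b) {t : α} (hbt : b ≤ t) : mu s t = if b = t then -1 else 0 := by
  refine eq_of_sum_Icc_eq (f := mu s) (g := fun t => if b = t then -1 else 0)
    (fun t hbt => ?_) hbt
  have hst : s < t := h.ge hbt
  have h_sum := hmu.2.1 hst
  rw [← add_sum_Ioc_eq_sum_Icc hst.le, hmu.1, Ioc_eq_Icc_of_Ioi_eq_Ici h] at h_sum
  rw [sum_ite_eq, if_pos (left_mem_Icc.2 hbt)]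
  linarith

theorem IsMobius.chi_eq_of_Ioi_eq_Ici {mu : α → α → ℤ} (hmu : IsMobius mu)
    (h : Set.Ioi s = Set.Ici b) (ρ : α → α → ℕ) {t : α} (hbt : b ≤ t) :
    chi ρ mu s t = X ^ ρ s t - X ^ ρ b t := by
  have h_above : ∑ w ∈ Icc b t, C (mu s w) * X ^ ρ w t = -X ^ ρ b t := by
    rw [sum_eq_single_of_mem b (left_mem_Icc.2 hbt), hmu.eq_of_Ioi_eq_Ici h le_rfl, if_pos rfl]
    · simp
    · intro w hw hwb
      rw [hmu.eq_of_Ioi_eq_Ici h (mem_Icc.1 hw).1, if_neg hwb.symm, C_0, zero_mul]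
  rw [chi, ← add_sum_Ioc_eq_sum_Icc (h.ge hbt : s < t).le, Ioc_eq_Icc_of_Ioi_eq_Ici h, h_above,
    hmu.1, C_1, one_mul, sub_eq_add_neg]

theorem IsMobius.red_chi_eq_of_Ioi_eq_Ici {ρ : α → α → ℕ} {mu : α → α → ℤ} (hmu : IsMobius mu)
    (h : Set.Ioi s = Set.Ici b) {t : α} (hbt : b ≤ t) (hρ : ρ s t = ρ b t + 1) :
    red (chi ρ mu) s t = X ^ ρ b t := by
  have h_factor : chi ρ mu s t = (X - 1) * X ^ ρ b t := by
    rw [hmu.chi_eq_of_Ioi_eq_Ici h ρ hbt, hρ]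
    ring
  have h_monic : (X - 1 : ℤ[X]).Monic := by simpa using monic_X_sub_C (1 : ℤ)
  rw [red, if_neg (h.ge hbt : s < t).ne, h_factor, mul_divByMonic_cancel_left _ h_monic]

end UniqueCover

section GradedRank

theorem add_eq_add_of_covBy {α : Type*} [PartialOrder α] [LocallyFiniteOrder α] {f g : α → ℕ}
    (hf : ∀ ⦃a b⦄, a ⋖ b → f b = f a + 1) (hg : ∀ ⦃a b⦄, a ⋖ b → g b = g a + 1) {s t : α}
    (hst : s ≤ t) : f t + g s = g t + f s := by
  induction le_iff_reflTransGen_covBy.1 hst with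
  | refl => exact add_comm _ _
  | tail hsa hab ih =>
    have h_step := ih (le_iff_reflTransGen_covBy.2 hsa)
    rw [hf hab, hg hab]
    lia

variable {P R : Type*} [PartialOrder P] [BoundedOrder P] [PartialOrder R] [BoundedOrder R]

theorem GradedData.isWeakRank {rk : P → ℕ} (h : GradedData rk) : IsWeakRank (rdiff rk) where
  pos _ _ hst := Nat.sub_pos_of_lt (h.mono hst)
  add _ _ _ hsw hwt := by
    have h_sw := h.mono.monotone hsw
    have h_wt := h.mono.monotone hwt
    simp only [rdiff]
    lia

variable [LocallyFiniteOrder P] {i : P ↪o R} {rkP : P → ℕ} {rkR : R → ℕ}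

theorem GradedData.rdiff_embedding_apply (hP : GradedData rkP) (hR : GradedData rkR)
    (hi : (Set.range i).OrdConnected) ⦃p q : P⦄ (hpq : p ≤ q) :
    rdiff rkR (i p) (i q) = rdiff rkP p q := by
  have h_cov ⦃a b : P⦄ (hab : a ⋖ b) : rkR (i b) = rkR (i a) + 1 :=
    hR.cov ((hi.apply_covBy_apply_iff i).2 hab)
  have h_add := add_eq_add_of_covBy (f := fun p => rkR (i p)) h_cov hP.cov hpq
  simp only [rdiff]
  lia

theorem GradedData.rdiff_bot_embedding_apply (hP : GradedData rkP) (hR : GradedData rkR)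
    (hi : Set.range i = Set.Ioi ⊥) (p : P) : rdiff rkR ⊥ (i p) = rdiff rkP ⊥ p + 1 := by
  have h_cov : ⊥ ⋖ i ⊥ := covBy_of_Ioi_eq_Ici (Ioi_eq_Ici_of_range_eq hi)
  have h_one : rdiff rkR ⊥ (i ⊥) = 1 := by rw [rdiff, hR.cov h_cov, Nat.add_sub_cancel_left]
  rw [hR.isWeakRank.add h_cov.le (i.monotone bot_le), h_one,
    hP.rdiff_embedding_apply hR (hi ▸ Set.ordConnected_Ioi) bot_le, add_comm]

end GradedRank

section Augmentation

variable {P R : Type*} [PartialOrder P] [PartialOrder R]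

/-- The inclusion of `P` in a poset isomorphic to its augmentation `WithBot P`. -/
def augEmbedding (e : R ≃o WithBot P) : P ↪o R :=
  WithBot.coeOrderHom.trans e.symm.toOrderEmbedding

theorem augEmbedding_apply (e : R ≃o WithBot P) (p : P) : augEmbedding e p = e.symm p :=
  rfl

theorem range_augEmbedding [OrderBot R] (e : R ≃o WithBot P) :
    Set.range (augEmbedding e) = Set.Ioi ⊥ := by
  ext r
  simp only [Set.mem_range, augEmbedding_apply, OrderIso.symm_apply_eq, Set.mem_Ioi,
    bot_lt_iff_ne_bot, ← WithBot.ne_bot_iff_exists, ne_eq, map_eq_bot_iff]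

theorem aug_chow_eq_chow_of_aug_general [OrderBot P] [LocallyFiniteOrder P] [OrderBot R]
    [LocallyFiniteOrder R] {i : P ↪o R} (hi : Set.range i = Set.Ioi ⊥)
    {ρP : P → P → ℕ} {ρR : R → R → ℕ} (hρ : ∀ ⦃p q⦄, p ≤ q → ρR (i p) (i q) = ρP p q)
    (hρ_bot : ∀ p, ρR ⊥ (i p) = ρP ⊥ p + 1)
    {muP : P → P → ℤ} (hmuP : IsMobius muP) {muR : R → R → ℤ} (hmuR : IsMobius muR)
    {HP : P → P → ℤ[X]} (hHP : IsChow (chi ρP muP) HP)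
    {HR : R → R → ℤ[X]} (hHR : IsChow (chi ρR muR) HR) (q : P) :
    zrevConv ρP HP ⊥ q = HR ⊥ (i q) := by
  have h_convex : (Set.range i).OrdConnected := hi ▸ Set.ordConnected_Ioi
  have h_above := Ioi_eq_Ici_of_range_eq hi
  have h_red (p : P) : red (chi ρR muR) ⊥ (i p) = X ^ ρP ⊥ p := by
    have h_step : ρR ⊥ (i p) = ρR (i ⊥) (i p) + 1 := by rw [hρ_bot, hρ bot_le]
    rw [hmuR.red_chi_eq_of_Ioi_eq_Ici h_above (i.monotone bot_le) h_step, hρ bot_le]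
  rw [hHR.eq_sum_Ioc (hi.le ⟨q, rfl⟩), Ioc_eq_Icc_of_Ioi_eq_Ici h_above, sum_Icc_embedding h_convex,
    zrevConv]
  refine sum_congr rfl fun p hp => ?_
  have h_chi := hmuP.chi_embedding_apply hmuR h_convex hρ
  rw [h_red, hHP.embedding_apply hHR h_convex h_chi (mem_Icc.1 hp).2]

end Augmentation

/-- Corollary 4.7: if `R ≅ aug(P)` is the augmentation of a finite graded bounded poset `P`
(adjoin a new minimum), then the left `χ`-augmented Chow polynomial of `P` equals the `χ`-Chow
polynomial of `aug(P)`: `G_P(x) = ℋ_{aug(P)}(x)`. -/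
theorem aug_chow_eq_chow_of_aug {P R : Type*}
    [PartialOrder P] [BoundedOrder P] [Fintype P] [LocallyFiniteOrder P]
    [PartialOrder R] [BoundedOrder R] [Fintype R] [LocallyFiniteOrder R]
    (rkP : P → ℕ) (hgP : GradedData rkP) (muP : P → P → ℤ) (hmuP : IsMobius muP)
    (HP : P → P → Polynomial ℤ) (hHP : IsChow (chi (rdiff rkP) muP) HP)
    (rkR : R → ℕ) (hgR : GradedData rkR) (muR : R → R → ℤ) (hmuR : IsMobius muR)
    (HR : R → R → Polynomial ℤ) (hHR : IsChow (chi (rdiff rkR) muR) HR)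
    (e : R ≃o WithBot P) :
    zrevConv (rdiff rkP) HP ⊥ ⊤ = HR ⊥ ⊤ := by
  rw [← map_top e.symm, ← WithBot.coe_top, ← augEmbedding_apply]
  have h_range := range_augEmbedding e
  have h_rank := hgP.rdiff_embedding_apply hgR (h_range ▸ Set.ordConnected_Ioi)
  have h_rank_bot := hgP.rdiff_bot_embedding_apply hgR h_range
  exact aug_chow_eq_chow_of_aug_general h_range h_rank h_rank_bot hmuP hmuR hHP hHR ⊤
end

section
/- Let P be a finite graded bounded poset, and consider the kernel χ with right KLS function f, left KLS function g = ζ, Z-function Z = g^rev·f, Chow function ℋ, and right augmented Chow function F = ℋ·f^rev. Then F_P(x) = Z_P(x) + x·Σ_{t ∈ P, ρ(t) > 1} ℋ_{trunc([0̂,t])}(x)·Z_{t1̂}(x), where trunc([0̂,t]) is the truncation of the interval [0̂,t] (removing its coatoms), F_P = F_{0̂1̂} and Z_P = Z_{0̂1̂}. -/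
/-!
Since `f^rev = χ·f` and `χ = μ·ζ^rev`, associativity gives `F = ℋ·f^rev = (ℋ·μ)·Z`.  Put
`D = χ̄ + μ`.  As `ℋ·χ̄ = -δ`, we get `ℋ·μ = δ + ℋ·D`, hence `F = Z + (ℋ·D)·Z`, and it remains to
show that `(ℋ·D)_{st}` is `x` times the Chow polynomial of the truncation when `ρ_{st} > 1`, and
zero otherwise.

Eliminating the constant terms by `Σ_w μ_{sw} = 0` yields, for `s < t`,
`(x - 1) D_{st} = Σ_{s ≤ w < t} μ_{sw} (x^{ρ_{wt}} - x)` and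
`χ_{st} = Σ_{s ≤ w < t} μ_{sw} (x^{ρ_{wt}} - 1)`.  The coatoms drop out of the first sum, and what
is left is `x` times the second sum for the truncation, where the ranks `ρ_{wt}` are one smaller
and `μ_{sw}` is unchanged.  Thus `D_{st}` is `x` times the reduced kernel of the truncation, and
`D_{st}` vanishes when `ρ_{st} ≤ 1`.  Substituting this into `ℋ·D` gives the recursion for the Chow
function of the truncation.
-/

open Finset Polynomial
open scoped Classical

noncomputable section

variable {α : Type*}

/-- A subtype of a finite partial order is a locally finite order. -/
noncomputable instance {β : Type*} [PartialOrder β] [Fintype β] {p : β → Prop} :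
    LocallyFiniteOrder {x : β // p x} := by
  classical
  exact Fintype.toLocallyFiniteOrder

/-- The truncation `trunc([0̂,t])` of the interval `[0̂,t]`: all elements `w ≤ t` except the
coatoms of the interval (the elements of rank `rk t - 1`). -/
abbrev Tr [Preorder α] (rk : α → ℕ) (t : α) : Type _ :=
  {w : α // w ≤ t ∧ rk w ≠ rk t - 1}

/-- The rank function of the truncation: ranks are preserved, except that the top element `t`
gets rank `rk t - 1`. -/
def trk [Preorder α] (rk : α → ℕ) (t : α) : Tr rk t → ℕ :=
  fun w => if (w : α) = t then rk t - 1 else rk (w : α)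

end

section Convolution

variable {α : Type*} [PartialOrder α] [LocallyFiniteOrder α]

lemma conv_assoc (a b c : α → α → ℤ[X]) : conv (conv a b) c = conv a (conv b c) := by
  funext s t
  simp only [conv, sum_mul, mul_sum, mul_assoc]
  refine sum_comm' fun v w => ?_
  simp only [mem_Icc]
  exact ⟨fun ⟨⟨_, hvt⟩, hsw, hwv⟩ => ⟨⟨hwv, hvt⟩, hsw, hwv.trans hvt⟩,
    fun ⟨⟨hwv, hvt⟩, hsw, _⟩ => ⟨⟨hsw.trans hwv, hvt⟩, hsw, hwv⟩⟩

lemma conv_dlt_left (a : α → α → ℤ[X]) {s t : α} (hst : s ≤ t) : conv dlt a s t = a s t := by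
  simp [conv, dlt, hst]

lemma conv_eq_sum_Ico_add (a b : α → α → ℤ[X]) {s t : α} (hst : s ≤ t) :
    conv a b s t = ∑ w ∈ Ico s t, a s w * b w t + a s t * b t t :=
  (sum_Ico_add_eq_sum_Icc hst).symm

lemma conv_congr {a a' b b' : α → α → ℤ[X]} {s t : α}
    (ha : ∀ w ∈ Icc s t, a s w = a' s w) (hb : ∀ w ∈ Icc s t, b w t = b' w t) :
    conv a b s t = conv a' b' s t :=
  sum_congr rfl fun w hw => by rw [ha w hw, hb w hw]

lemma conv_right_cancel {a a' b : α → α → ℤ[X]} (hb : ∀ v, b v v ≠ 0) {s t : α} (hst : s ≤ t)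
    (h : ∀ v ∈ Icc s t, conv a b s v = conv a' b s v) : a s t = a' s t := by
  suffices ∀ n, ∀ v ∈ Icc s t, #(Icc s v) = n → a s v = a' s v from
    this _ t (right_mem_Icc.2 hst) rfl
  intro n
  induction n using Nat.strong_induction_on with
  | _ n ih =>
    rintro v hv rfl
    obtain ⟨hsv, hvt⟩ := mem_Icc.1 hv
    have hlower : ∑ w ∈ Ico s v, a s w * b w v = ∑ w ∈ Ico s v, a' s w * b w v := by
      refine sum_congr rfl fun w hw => ?_
      obtain ⟨hsw, hwv⟩ := mem_Ico.1 hw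
      rw [ih _ (card_lt_card (Icc_ssubset_Icc_right hsv le_rfl hwv)) w
        (mem_Icc.2 ⟨hsw, hwv.le.trans hvt⟩) rfl]
    have hconv := h v hv
    rw [conv_eq_sum_Ico_add _ _ hsv, conv_eq_sum_Ico_add _ _ hsv, hlower,
      add_right_inj] at hconv
    exact mul_right_cancel₀ (hb v) hconv

end Convolution

section ReducedKernel

@[simp]
lemma red_self {α : Type*} [PartialOrder α] (κ : α → α → ℤ[X]) (s : α) : red κ s s = -1 :=
  if_pos rfl

variable {α : Type*} [PartialOrder α] [LocallyFiniteOrder α]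

/-- An integer-valued function on intervals, such as the Möbius function, as an element of the
incidence algebra over `ℤ[x]`. -/
noncomputable def intCoeff {α : Type*} (mu : α → α → ℤ) : α → α → ℤ[X] :=
  fun s t => C (mu s t)

/-- The sum `D = χ̄ + μ` of the reduced characteristic kernel and the Möbius function.  Convolving
with `ℋ` on the left turns it into `ℋ·μ - δ`, because `ℋ·χ̄ = -δ`. -/
noncomputable def redAddMobius (ρ : α → α → ℕ) (mu : α → α → ℤ) : α → α → ℤ[X] :=
  fun s t => red (chi ρ mu) s t + intCoeff mu s t

namespace IsMobius

variable {mu : α → α → ℤ}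

lemma conv_one (hmu : IsMobius mu) {s t : α} (hst : s ≤ t) :
    conv (intCoeff mu) 1 s t = dlt s t := by
  simp only [conv, intCoeff, Pi.one_apply, mul_one, ← map_sum]
  obtain rfl | hlt := hst.eq_or_lt
  · simp [hmu.1, dlt]
  · simp [hmu.2.1 hlt, dlt, hlt.ne]

lemma sum_Ico_C_eq_neg (hmu : IsMobius mu) {s t : α} (hst : s < t) :
    ∑ w ∈ Ico s t, C (mu s w) = -C (mu s t) := by
  rw [← map_sum, ← C_neg, eq_neg_of_add_eq_zero_left
    ((sum_Ico_add_eq_sum_Icc hst.le).trans (hmu.2.1 hst))]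

lemma X_sub_one_mul_red_chi_s17 (hmu : IsMobius mu) (ρ : α → α → ℕ) {s t : α} (hst : s < t) :
    (X - 1) * red (chi ρ mu) s t = chi ρ mu s t := by
  have hroot : (chi ρ mu s t).IsRoot 1 := by
    simpa [chi, IsRoot.def, eval_finsetSum] using hmu.2.1 hst
  simpa [red, hst.ne] using mul_divByMonic_eq_iff_isRoot.2 hroot

lemma chi_eq_sum_Ico (hmu : IsMobius mu) (rk : α → ℕ) {s t : α} (hst : s < t) :
    chi (rdiff rk) mu s t = ∑ w ∈ Ico s t, C (mu s w) * (X ^ rdiff rk w t - 1) := by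
  rw [chi, ← sum_Ico_add_eq_sum_Icc hst.le]
  simp only [mul_sub, mul_one, sum_sub_distrib, hmu.sum_Ico_C_eq_neg hst, rdiff, Nat.sub_self,
    pow_zero, sub_neg_eq_add]

lemma X_sub_one_mul_redAddMobius (hmu : IsMobius mu) (rk : α → ℕ) {s t : α} (hst : s < t) :
    (X - 1) * redAddMobius (rdiff rk) mu s t
      = ∑ w ∈ Ico s t, C (mu s w) * (X ^ rdiff rk w t - X) := by
  have hsplit : ∑ w ∈ Ico s t, C (mu s w) * (X ^ rdiff rk w t - X)
      = ∑ w ∈ Ico s t, C (mu s w) * (X ^ rdiff rk w t - 1)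
        - (∑ w ∈ Ico s t, C (mu s w)) * (X - 1) := by
    rw [sum_mul, ← sum_sub_distrib]
    exact sum_congr rfl fun w _ => by ring
  rw [hsplit, ← hmu.chi_eq_sum_Ico rk hst, hmu.sum_Ico_C_eq_neg hst, redAddMobius, intCoeff,
    mul_add, hmu.X_sub_one_mul_red_chi_s17 _ hst]
  ring

lemma redAddMobius_eq_zero (hmu : IsMobius mu) {rk : α → ℕ} (hrk : StrictMono rk) {s t : α}
    (hst : s ≤ t) (h : rk t ≤ rk s + 1) : redAddMobius (rdiff rk) mu s t = 0 := by
  obtain rfl | hlt := hst.eq_or_lt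
  · simp [redAddMobius, intCoeff, hmu.1]
  refine (mul_eq_zero.1 ?_).resolve_left (X_sub_C_ne_zero (1 : ℤ))
  rw [C_1, hmu.X_sub_one_mul_redAddMobius rk hlt]
  refine sum_eq_zero fun w hw => ?_
  obtain ⟨hsw, hwt⟩ := mem_Ico.1 hw
  have hone : rdiff rk w t = 1 := by
    have := hrk.monotone hsw
    have := hrk hwt
    simp only [rdiff]
    omega
  rw [hone, pow_one, sub_self, mul_zero]

lemma conv_redAddMobius_eq_zero (hmu : IsMobius mu) {rk : α → ℕ} (hrk : StrictMono rk)
    (H : α → α → ℤ[X]) {s t : α} (h : rk t ≤ rk s + 1) :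
    conv H (redAddMobius (rdiff rk) mu) s t = 0 := by
  refine sum_eq_zero fun w hw => ?_
  obtain ⟨hsw, hwt⟩ := mem_Icc.1 hw
  have := hrk.monotone hsw
  rw [hmu.redAddMobius_eq_zero hrk hwt (by omega), mul_zero]

end IsMobius

namespace IsChow

variable {H : α → α → ℤ[X]}

lemma apply_eq_sum_Ico {κ : α → α → ℤ[X]} (hH : IsChow κ H) {s t : α} (hst : s < t) :
    H s t = ∑ w ∈ Ico s t, H s w * red κ w t := by
  have hconv := hH.right hst.le
  rw [conv_eq_sum_Ico_add _ _ hst.le, red_self, dlt, if_neg hst.ne] at hconv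
  linear_combination -hconv

lemma conv_mobius {ρ : α → α → ℕ} {mu : α → α → ℤ} (hH : IsChow (chi ρ mu) H) {s t : α}
    (hst : s ≤ t) :
    conv H (intCoeff mu) s t = dlt s t + conv H (redAddMobius ρ mu) s t := by
  have hsplit : conv H (redAddMobius ρ mu) s t
      = conv H (red (chi ρ mu)) s t + conv H (intCoeff mu) s t := by
    simp only [conv, redAddMobius, mul_add, sum_add_distrib]
  rw [hsplit, hH.right hst, add_neg_cancel_left]

end IsChow

lemma IsRightKLS.conv_rev {ρ : α → α → ℕ} {mu : α → α → ℤ} {f : α → α → ℤ[X]}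
    (hf : IsRightKLS ρ (chi ρ mu) f) (H : α → α → ℤ[X]) (s t : α) :
    conv H (rev ρ f) s t = conv (conv H (intCoeff mu)) (zrevConv ρ f) s t := by
  have hchi : chi ρ mu = conv (intCoeff mu) (fun s t => X ^ ρ s t) := rfl
  have hZ : zrevConv ρ f = conv (fun s t => X ^ ρ s t) f := rfl
  rw [hZ, conv_assoc, ← conv_assoc (intCoeff mu), ← hchi]
  exact conv_congr (fun _ _ => rfl) fun w hw => hf.rev_eq (mem_Icc.1 hw).2

lemma IsChow.conv_rev {ρ : α → α → ℕ} {mu : α → α → ℤ} {H f : α → α → ℤ[X]}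
    (hH : IsChow (chi ρ mu) H) (hf : IsRightKLS ρ (chi ρ mu) f) {s t : α} (hst : s ≤ t) :
    conv H (rev ρ f) s t
      = zrevConv ρ f s t + conv (conv H (redAddMobius ρ mu)) (zrevConv ρ f) s t := by
  calc conv H (rev ρ f) s t
      = conv (conv H (intCoeff mu)) (zrevConv ρ f) s t := hf.conv_rev H s t
    _ = conv (dlt + conv H (redAddMobius ρ mu)) (zrevConv ρ f) s t :=
      conv_congr (fun _ hw => hH.conv_mobius (mem_Icc.1 hw).1) fun _ _ => rfl
    _ = conv dlt (zrevConv ρ f) s t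
          + conv (conv H (redAddMobius ρ mu)) (zrevConv ρ f) s t := by
      simp only [conv, Pi.add_apply, add_mul, sum_add_distrib]
    _ = _ := by rw [conv_dlt_left _ hst]

end ReducedKernel

section Subtype

lemma dlt_subtype {α : Type*} [PartialOrder α] {p : α → Prop} (s t : {x // p x}) :
    dlt s t = dlt (s : α) t := by
  simp only [dlt, Subtype.ext_iff]

variable {α : Type*} [PartialOrder α] [LocallyFiniteOrder α] {p : α → Prop}
  [LocallyFiniteOrder {x // p x}]

lemma sum_Icc_subtype [DecidablePred p] {M : Type*} [AddCommMonoid M] (s t : {x // p x})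
    (g : α → M) :
    ∑ w ∈ Icc s t, g w = ∑ w ∈ Icc (s : α) t with p w, g w := by
  rw [← sum_subtype_eq_sum_filter]
  congr 1
  ext w
  simp

lemma sum_Ico_subtype [DecidablePred p] {M : Type*} [AddCommMonoid M] (s t : {x // p x})
    (g : α → M) :
    ∑ w ∈ Ico s t, g w = ∑ w ∈ Ico (s : α) t with p w, g w := by
  rw [← sum_subtype_eq_sum_filter]
  congr 1
  ext w
  simp

lemma conv_subtype (a b : α → α → ℤ[X]) {s t : {x // p x}}
    (hp : ∀ w ∈ Icc (s : α) t, p w) :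
    conv (fun x y : {x // p x} => a x y) (fun x y => b x y) s t = conv a b s t := by
  rw [conv, sum_Icc_subtype s t (fun w => a s w * b w t), filter_true_of_mem hp, conv]

lemma IsMobius.subtype_eq {mu : α → α → ℤ} (hmu : IsMobius mu)
    {mu' : {x // p x} → {x // p x} → ℤ} (hmu' : IsMobius mu') {s t : {x // p x}} (hst : s ≤ t)
    (hp : ∀ w ∈ Icc (s : α) t, p w) : mu' s t = mu s t := by
  refine C_injective <| conv_right_cancel (a := intCoeff mu')
    (a' := fun x y => intCoeff mu x y) (b := 1) (fun _ => one_ne_zero) hst fun v hv => ?_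
  obtain ⟨hsv, hvt⟩ := mem_Icc.1 hv
  have hpv : ∀ w ∈ Icc (s : α) v, p w := fun w hw =>
    hp w (Icc_subset_Icc_right (Subtype.coe_le_coe.2 hvt) hw)
  rw [hmu'.conv_one hsv, dlt_subtype, ← hmu.conv_one hsv]
  exact (conv_subtype _ 1 hpv).symm

lemma IsChow.subtype_eq {κ H : α → α → ℤ[X]} (hH : IsChow κ H)
    {κ' H' : {x // p x} → {x // p x} → ℤ[X]} (hH' : IsChow κ' H') {s t : {x // p x}}
    (hst : s ≤ t) (hp : ∀ w ∈ Icc (s : α) t, p w)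
    (hκ : ∀ u v, s ≤ u → u ≤ v → v ≤ t → κ' u v = κ u v) : H' s t = H s t := by
  refine conv_right_cancel (a := H') (a' := fun x y => H x y) (b := red κ')
    (fun v => by simp) hst fun v hv => ?_
  obtain ⟨hsv, hvt⟩ := mem_Icc.1 hv
  have hpv : ∀ w ∈ Icc (s : α) v, p w := fun w hw =>
    hp w (Icc_subset_Icc_right (Subtype.coe_le_coe.2 hvt) hw)
  have hred : ∀ w ∈ Icc s v, red κ' w v = red κ w v := fun w hw => by
    obtain ⟨hsw, hwv⟩ := mem_Icc.1 hw
    simp only [red, Subtype.ext_iff, hκ w v hsw hwv hvt]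
  rw [hH'.right hsv, dlt_subtype, ← hH.right hsv, ← conv_subtype _ _ hpv]
  exact conv_congr (fun _ _ => rfl) fun w hw => (hred w hw).symm

end Subtype

namespace Tr

/-- The maximum `t` of the truncation of `[0̂,t]`; it survives the truncation because
`rk t ≠ rk t - 1` when `rk t` is positive. -/
def top {α : Type*} [Preorder α] {rk : α → ℕ} {t : α} (ht : 0 < rk t) : Tr rk t :=
  ⟨t, le_rfl, by omega⟩

variable {α : Type*} [PartialOrder α] {rk : α → ℕ} {t : α}

lemma coe_lt_of_lt_top {ht : 0 < rk t} {w : Tr rk t} (hw : w < top ht) : (w : α) < t :=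
  hw

lemma mem_of_le_of_lt_top (hrk : StrictMono rk) {ht : 0 < rk t} {u : Tr rk t} (hu : u < top ht)
    {w : α} (hw : w ≤ u) : w ≤ t ∧ rk w ≠ rk t - 1 := by
  have hwu := hrk.monotone hw
  have hut := hrk (coe_lt_of_lt_top hu)
  have := u.2.2
  exact ⟨hw.trans u.2.1, by omega⟩

lemma trk_of_lt_top {ht : 0 < rk t} {w : Tr rk t} (hw : w < top ht) : trk rk t w = rk w :=
  if_neg (coe_lt_of_lt_top hw).ne

lemma rdiff_trk_top_add_one (hrk : StrictMono rk) {ht : 0 < rk t} {w : Tr rk t} (hw : w < top ht) :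
    rdiff (trk rk t) w (top ht) + 1 = rdiff rk w t := by
  have hwt := hrk (coe_lt_of_lt_top hw)
  have := w.2.2
  have htop : trk rk t (top ht) = rk t - 1 := if_pos rfl
  simp only [rdiff, htop, trk_of_lt_top hw]
  omega

end Tr

section IsTruncChow

variable {α : Type*} [PartialOrder α] [Fintype α] {rk : α → ℕ} {t : α}

/-- `p` is the Chow polynomial of `trunc([s,t])`, the interval `[s,t]` without its elements of rank
`rk t - 1`.  It is read off as the entry at `(s,t)` of the Chow function of `Tr rk t`, in which
`trunc([s,t])` is the interval from `s` to `t`. -/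
def IsTruncChow (rk : α → ℕ) (s t : α) (p : ℤ[X]) : Prop :=
  ∃ (mu' : Tr rk t → Tr rk t → ℤ) (H' : Tr rk t → Tr rk t → ℤ[X]) (b : Tr rk t) (ht : 0 < rk t),
    (b : α) = s ∧ IsMobius mu' ∧ IsChow (chi (rdiff (trk rk t)) mu') H' ∧ p = H' b (Tr.top ht)

lemma IsTruncChow.of_isBot [OrderBot α] (hbot : rk ⊥ = 0) (ht : 1 < rk t) {p : ℤ[X]}
    (hp : ∃ (mu' : Tr rk t → Tr rk t → ℤ) (H' : Tr rk t → Tr rk t → ℤ[X]) (b : Tr rk t),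
      IsBot b ∧ IsMobius mu' ∧ IsChow (chi (rdiff (trk rk t)) mu') H' ∧
        p = H' b (Tr.top (Nat.zero_lt_of_lt ht))) :
    IsTruncChow rk ⊥ t p := by
  obtain ⟨mu', H', b, hb, hmu', hH', hp⟩ := hp
  have hb_le : b ≤ ⟨⊥, bot_le, by omega⟩ := hb _
  exact ⟨mu', H', b, Nat.zero_lt_of_lt ht, le_bot_iff.1 hb_le, hmu', hH', hp⟩

end IsTruncChow

section Truncation

variable {α : Type*} [PartialOrder α] [Fintype α] [LocallyFiniteOrder α] {rk : α → ℕ} {t : α}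

lemma sum_Ico_trunc_top {M : Type*} [AddCommMonoid M] {ht : 0 < rk t} (s : Tr rk t) {g : α → M}
    (hg : ∀ w ∈ Ico (s : α) t, rk w = rk t - 1 → g w = 0) :
    ∑ w ∈ Ico s (Tr.top ht), g w = ∑ w ∈ Ico (s : α) t, g w := by
  rw [sum_Ico_subtype]
  exact sum_filter_of_ne fun w hw hne => ⟨(mem_Ico.1 hw).2.le, fun h => hne (hg w hw h)⟩

variable {ht : 0 < rk t} {mu : α → α → ℤ} {mu' : Tr rk t → Tr rk t → ℤ}

lemma IsMobius.trunc_eq (hrk : StrictMono rk) (hmu : IsMobius mu) (hmu' : IsMobius mu')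
    {s u : Tr rk t} (hsu : s ≤ u) (hu : u < Tr.top ht) : mu' s u = mu s u :=
  hmu.subtype_eq hmu' hsu fun _ hw => Tr.mem_of_le_of_lt_top hrk hu (mem_Icc.1 hw).2

lemma chi_trunc_eq (hrk : StrictMono rk) (hmu : IsMobius mu) (hmu' : IsMobius mu')
    {s u : Tr rk t} (hu : u < Tr.top ht) :
    chi (rdiff (trk rk t)) mu' s u = chi (rdiff rk) mu s u := by
  have hmem : ∀ w ∈ Icc (s : α) u, w ≤ t ∧ rk w ≠ rk t - 1 := fun _ hw =>
    Tr.mem_of_le_of_lt_top hrk hu (mem_Icc.1 hw).2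
  refine Eq.trans ?_ (conv_subtype (intCoeff mu) (fun x y => X ^ rdiff rk x y) hmem)
  refine sum_congr rfl fun w hw => ?_
  obtain ⟨hsw, hwu⟩ := mem_Icc.1 hw
  have hwt := hwu.trans_lt hu
  simp only [intCoeff, rdiff, hmu.trunc_eq hrk hmu' hsw hwt, Tr.trk_of_lt_top hwt,
    Tr.trk_of_lt_top hu]

lemma IsChow.trunc_eq (hrk : StrictMono rk) (hmu : IsMobius mu) (hmu' : IsMobius mu')
    {H : α → α → ℤ[X]} (hH : IsChow (chi (rdiff rk) mu) H)
    {H' : Tr rk t → Tr rk t → ℤ[X]} (hH' : IsChow (chi (rdiff (trk rk t)) mu') H')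
    {s u : Tr rk t} (hsu : s ≤ u) (hu : u < Tr.top ht) : H' s u = H s u :=
  hH.subtype_eq hH' hsu (fun _ hw => Tr.mem_of_le_of_lt_top hrk hu (mem_Icc.1 hw).2)
    fun _ _ _ _ hvu => chi_trunc_eq hrk hmu hmu' (hvu.trans_lt hu)

lemma X_mul_chi_trunc_top (hrk : StrictMono rk) (hmu : IsMobius mu) (hmu' : IsMobius mu')
    {s : Tr rk t} (hs : s < Tr.top ht) :
    X * chi (rdiff (trk rk t)) mu' s (Tr.top ht)
      = (X - 1) * redAddMobius (rdiff rk) mu s t := by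
  have hcoatom : ∀ w ∈ Ico (s : α) t, rk w = rk t - 1 →
      C (mu s w) * (X ^ rdiff rk w t - X) = 0 := fun w _ hw => by
    have hone : rdiff rk w t = 1 := by
      simp only [rdiff]
      omega
    rw [hone, pow_one, sub_self, mul_zero]
  rw [hmu'.chi_eq_sum_Ico _ hs, hmu.X_sub_one_mul_redAddMobius rk (Tr.coe_lt_of_lt_top hs),
    ← sum_Ico_trunc_top (ht := ht) s hcoatom, mul_sum]
  refine sum_congr rfl fun w hw => ?_
  obtain ⟨hsw, hwt⟩ := mem_Ico.1 hw
  rw [hmu.trunc_eq hrk hmu' hsw hwt, ← Tr.rdiff_trk_top_add_one hrk hwt]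
  ring

lemma X_mul_red_chi_trunc_top (hrk : StrictMono rk) (hmu : IsMobius mu) (hmu' : IsMobius mu')
    {s : Tr rk t} (hs : s < Tr.top ht) :
    X * red (chi (rdiff (trk rk t)) mu') s (Tr.top ht) = redAddMobius (rdiff rk) mu s t := by
  apply mul_left_cancel₀ (X_sub_C_ne_zero (1 : ℤ))
  rw [C_1, mul_left_comm, hmu'.X_sub_one_mul_red_chi_s17 _ hs, X_mul_chi_trunc_top hrk hmu hmu' hs]

lemma IsChow.conv_redAddMobius_eq_X_mul_trunc (hrk : StrictMono rk) (hmu : IsMobius mu)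
    (hmu' : IsMobius mu') {H : α → α → ℤ[X]} (hH : IsChow (chi (rdiff rk) mu) H)
    {H' : Tr rk t → Tr rk t → ℤ[X]} (hH' : IsChow (chi (rdiff (trk rk t)) mu') H')
    {s : Tr rk t} (hs : s < Tr.top ht) :
    conv H (redAddMobius (rdiff rk) mu) s t = X * H' s (Tr.top ht) := by
  have hcoatom : ∀ w ∈ Ico (s : α) t, rk w = rk t - 1 →
      H s w * redAddMobius (rdiff rk) mu w t = 0 := fun w hw hwt => by
    rw [hmu.redAddMobius_eq_zero hrk (mem_Ico.1 hw).2.le (by omega), mul_zero]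
  calc conv H (redAddMobius (rdiff rk) mu) s t
      = ∑ w ∈ Ico (s : α) t, H s w * redAddMobius (rdiff rk) mu w t := by
        rw [conv_eq_sum_Ico_add _ _ s.2.1, hmu.redAddMobius_eq_zero hrk le_rfl (Nat.le_succ _),
          mul_zero, add_zero]
    _ = ∑ w ∈ Ico s (Tr.top ht), H s w * redAddMobius (rdiff rk) mu w t :=
        (sum_Ico_trunc_top s hcoatom).symm
    _ = ∑ w ∈ Ico s (Tr.top ht),
          X * (H' s w * red (chi (rdiff (trk rk t)) mu') w (Tr.top ht)) := by
        refine sum_congr rfl fun w hw => ?_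
        obtain ⟨hsw, hwt⟩ := mem_Ico.1 hw
        rw [← X_mul_red_chi_trunc_top hrk hmu hmu' hwt, hH.trunc_eq hrk hmu hmu' hH' hsw hwt,
          mul_left_comm]
    _ = X * H' s (Tr.top ht) := by rw [← mul_sum, ← hH'.apply_eq_sum_Ico hs]

lemma IsTruncChow.conv_redAddMobius {s : α} {p : ℤ[X]} (hp : IsTruncChow rk s t p)
    (hrk : StrictMono rk) (hmu : IsMobius mu) {H : α → α → ℤ[X]}
    (hH : IsChow (chi (rdiff rk) mu) H) (hst : s < t) :
    conv H (redAddMobius (rdiff rk) mu) s t = X * p := by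
  obtain ⟨mu', H', b, ht, rfl, hmu', hH', rfl⟩ := hp
  exact hH.conv_redAddMobius_eq_X_mul_trunc hrk hmu hmu' hH' (ht := ht) hst

theorem right_augmented_larson_recursion_general (hrk : StrictMono rk) (hmu : IsMobius mu)
    {H f : α → α → ℤ[X]} (hH : IsChow (chi (rdiff rk) mu) H)
    (hf : IsRightKLS (rdiff rk) (chi (rdiff rk) mu) f) {s v : α} (hsv : s ≤ v) {HT : α → ℤ[X]}
    (hHT : ∀ t ∈ Icc s v, rk s + 1 < rk t → IsTruncChow rk s t (HT t)) :
    conv H (rev (rdiff rk) f) s v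
      = zrevConv (rdiff rk) f s v
        + X * ∑ t ∈ Icc s v with rk s + 1 < rk t, HT t * zrevConv (rdiff rk) f t v := by
  rw [hH.conv_rev hf hsv, mul_sum, sum_filter]
  congr 1
  refine sum_congr rfl fun t ht => ?_
  split_ifs with hlt
  · have hst : s < t := (mem_Icc.1 ht).1.lt_of_ne (by rintro rfl; omega)
    rw [(hHT t ht hlt).conv_redAddMobius hrk hmu hH hst, mul_assoc]
  · rw [hmu.conv_redAddMobius_eq_zero hrk H (not_lt.1 hlt), zero_mul]

end Truncation

/-- Proposition 4.10: for a finite graded bounded poset `P`, with `f` the right KLS function of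
the kernel `χ`, `Z = ζ^rev·f` the `Z`-function, and `F = ℋ·f^rev` the right augmented Chow
function, one has `F_P(x) = Z_P(x) + x Σ_{t : ρ(t) > 1} ℋ_{trunc([0̂,t])}(x) · Z_{t1̂}(x)`.
Here `HT t` is the `χ`-Chow polynomial of the truncation `trunc([0̂,t])`, characterized by the
existence of the Möbius and Chow functions of that truncated poset. -/
theorem right_augmented_larson_recursion {α : Type*}
    [PartialOrder α] [BoundedOrder α] [Fintype α] [LocallyFiniteOrder α]
    (rk : α → ℕ) (hg : GradedData rk)
    (mu : α → α → ℤ) (hmu : IsMobius mu)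
    (H : α → α → Polynomial ℤ) (hH : IsChow (chi (rdiff rk) mu) H)
    (f : α → α → Polynomial ℤ) (hf : IsRightKLS (rdiff rk) (chi (rdiff rk) mu) f)
    (HT : α → Polynomial ℤ)
    (hHT : ∀ (t : α) (ht : 1 < rk t),
      ∃ (mu' : Tr rk t → Tr rk t → ℤ) (H' : Tr rk t → Tr rk t → Polynomial ℤ) (b : Tr rk t),
        IsBot b ∧ IsMobius mu' ∧ IsChow (chi (rdiff (trk rk t)) mu') H' ∧
        HT t = H' b ⟨t, le_refl t, by omega⟩) :
    conv H (rev (rdiff rk) f) ⊥ ⊤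
      = zrevConv (rdiff rk) f ⊥ ⊤
        + X * ∑ t ∈ Finset.univ.filter (fun t : α => 1 < rk t),
            HT t * zrevConv (rdiff rk) f t ⊤ := by
  have one_lt {t : α} (ht : rk ⊥ + 1 < rk t) : 1 < rk t := by rwa [hg.bot] at ht
  simpa [hg.bot] using right_augmented_larson_recursion_general hg.mono hmu hH hf (bot_le (a := ⊤))
    fun t _ ht => .of_isBot hg.bot (one_lt ht) (hHT t (one_lt ht))
end
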